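/- arXiv:0711.3849 — 4 statements merged into one kernel-verified Lean document; each statement's English description precedes it below -/
import Mathlib

section
/- Let F be a field with char F ≠ 2. Let e₁ = (1,0,0,0,0), e₃ = (0,0,1,0,0) ∈ F⁵. Define C = {h ∈ G : h·e₃ = e₃}, P = {g ∈ G : g·e₁ is a scalar multiple of e₁}, N = {n(x₁,x₂,x₃) : x₁,x₂,x₃ ∈ F}, a_α = diag(α,1,1,1,α⁻¹) for α ∈ Fˣ, and let γ₀ be the 5×5 matrix whose columns are (1/2, 0, −1, 0, −1), (0, 1, 0, 0, 0), (1/2, 0, 0, 0, 1), (0, 0, 0, 1, 0), (−1/4, 0, −1/2, 0, 1/2). Then every g ∈ G can be written either as g = p·h with p ∈ P and h ∈ C, or as g = n·a_α·γ₀·h with n ∈ N, α ∈ Fˣ and h ∈ C; moreover no g ∈ G admits factorizations of both kinds, i.e. the sets P·C and N·{a_α : α ∈ Fˣ}·γ₀·C are disjoint and their union is G. -/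
open Matrix

noncomputable section

/-- The 5×5 matrix `J` of the split quadratic form in five variables. -/
def J5 (F : Type*) [Field F] : Matrix (Fin 5) (Fin 5) F :=
  Matrix.of fun i j => if (i : ℕ) + (j : ℕ) = 4 then 1 else 0

/-- The group `G = SO(3,2;F)`, as a set of 5×5 matrices. -/
def SO32 (F : Type*) [Field F] : Set (Matrix (Fin 5) (Fin 5) F) :=
  {g | gᵀ * J5 F * g = J5 F ∧ g.det = 1}

/-- The unipotent matrix `n(x₁,x₂,x₃,x₄)`. -/
def nmat {F : Type*} [Field F] (x₁ x₂ x₃ x₄ : F) : Matrix (Fin 5) (Fin 5) F :=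
  !![1, -x₃, x₃*x₄ - x₂, -(x₂*x₄) + x₃*x₄^2/2 - x₁, -(x₁*x₃) - x₂^2/2;
     0, 1, -x₄, -(x₄^2)/2, x₁;
     0, 0, 1, x₄, x₂;
     0, 0, 0, 1, x₃;
     0, 0, 0, 0, 1]

def e1 (F : Type*) [Field F] : Fin 5 → F := ![1,0,0,0,0]

def e3 (F : Type*) [Field F] : Fin 5 → F := ![0,0,1,0,0]

/-- The subgroup `C = Stab_G(e₃)`. -/
def Cset (F : Type*) [Field F] : Set (Matrix (Fin 5) (Fin 5) F) :=
  {g ∈ SO32 F | g.mulVec (e3 F) = e3 F}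

/-- The parabolic `P`: elements of `G` mapping `e₁` to a scalar multiple of `e₁`. -/
def Pset (F : Type*) [Field F] : Set (Matrix (Fin 5) (Fin 5) F) :=
  {g ∈ SO32 F | ∃ c : F, g.mulVec (e1 F) = c • e1 F}

/-- The matrix `a_α = diag(α,1,1,1,α⁻¹)`. -/
def amat {F : Type*} [Field F] (α : F) : Matrix (Fin 5) (Fin 5) F :=
  Matrix.diagonal ![α, 1, 1, 1, α⁻¹]

/-- The matrix `γ₀` (split case), given by its columns. -/
def gamma0 (F : Type*) [Field F] : Matrix (Fin 5) (Fin 5) F :=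
  (!![1/2, 0, -1, 0, -1;
      0, 1, 0, 0, 0;
      1/2, 0, 0, 0, 1;
      0, 0, 0, 1, 0;
      -(1/4), 0, -(1/2), 0, 1/2] : Matrix (Fin 5) (Fin 5) F)ᵀ

/-!
Both kinds of products are detected by the vector `v = g e₃`, on which the right factor in `C` has
no effect: two elements of `G` agree on `e₃` exactly when they differ by an element of `C` on the
right (`exists_Cset_of_mulVec_eq`). Indices are `0, …, 4` below, so `v 4` is the coordinate along
`e₅`, and `Q(v) = Q(e₃) = 1`.

* An element of `P` stabilises the line of `e₁`, hence its orthogonal complement `{v 4 = 0}`, which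
  contains `e₃`; so `v 4 = 0` for `g ∈ P·C`. On the other hand
  `n(x₁,x₂,x₃) a_α γ₀ e₃ = α⁻¹ (∗, x₁, x₂, x₃, 1) + (α/2) e₁` has last coordinate `α⁻¹ ≠ 0`. This
  gives disjointness.
* If `v 4 ≠ 0`, the choices `α = (v 4)⁻¹`, `xᵢ = α v i` produce an element of `N A γ₀` with the right
  coordinates `1, …, 4` on `e₃`; the coordinate `0` is then forced by `Q(v) = 1`.
* If `v 4 = 0`, then `w = (v 1, v 2, v 3)` has norm one for the ternary form, and an explicit
  isometry `A` of determinant one sends the middle basis vector to `w` (`exists_ternary`). A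
  unipotent factor corrects the coordinate `v 0`, giving an element of `P` sending `e₃` to `v`
  (`exists_Pset_mulVec_e3`).
-/

/-- The isometry condition `ᵗg J g = J`, entry by entry. -/
lemma SO32_entry {F : Type*} [Field F] {g : Matrix (Fin 5) (Fin 5) F} (hg : g ∈ SO32 F)
    (i j : Fin 5) :
    g 4 i * g 0 j + g 3 i * g 1 j + g 2 i * g 2 j + g 1 i * g 3 j + g 0 i * g 4 j
      = J5 F i j := by
  have h := congrFun (congrFun hg.1 i) j
  rw [← h]
  simp [Matrix.mul_apply, Fin.sum_univ_five, J5]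

lemma SO32_mul {F : Type*} [Field F] {g k : Matrix (Fin 5) (Fin 5) F} (hg : g ∈ SO32 F)
    (hk : k ∈ SO32 F) : g * k ∈ SO32 F := by
  refine ⟨?_, by rw [det_mul, hg.2, hk.2, one_mul]⟩
  calc (g * k)ᵀ * J5 F * (g * k) = kᵀ * (gᵀ * J5 F * g) * k := by
        simp only [transpose_mul, Matrix.mul_assoc]
    _ = J5 F := by rw [hg.1, hk.1]

lemma SO32_inv {F : Type*} [Field F] {g : Matrix (Fin 5) (Fin 5) F} (hg : g ∈ SO32 F) :
    g⁻¹ ∈ SO32 F := by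
  have hu : IsUnit g.det := by rw [hg.2]; exact isUnit_one
  have hr : g * g⁻¹ = 1 := mul_nonsing_inv g hu
  have hr' : (g⁻¹)ᵀ * gᵀ = 1 := by rw [← transpose_mul, hr, transpose_one]
  refine ⟨?_, by rw [det_nonsing_inv, hg.2, Ring.inverse_one]⟩
  calc (g⁻¹)ᵀ * J5 F * g⁻¹ = (g⁻¹)ᵀ * (gᵀ * J5 F * g) * g⁻¹ := by rw [hg.1]
    _ = ((g⁻¹)ᵀ * gᵀ) * J5 F * (g * g⁻¹) := by simp only [Matrix.mul_assoc]
    _ = J5 F := by rw [hr, hr', Matrix.one_mul, Matrix.mul_one]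

lemma exists_Cset_of_mulVec_eq {F : Type*} [Field F] {g q : Matrix (Fin 5) (Fin 5) F}
    (hg : g ∈ SO32 F) (hq : q ∈ SO32 F) (h : q.mulVec (e3 F) = g.mulVec (e3 F)) :
    ∃ k ∈ Cset F, g = q * k := by
  have hu : IsUnit q.det := by rw [hq.2]; exact isUnit_one
  refine ⟨q⁻¹ * g, ⟨SO32_mul (SO32_inv hq) hg, ?_⟩, ?_⟩
  · rw [← mulVec_mulVec, ← h, mulVec_mulVec, nonsing_inv_mul q hu, one_mulVec]
  · rw [mul_nonsing_inv_cancel_left q g hu]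

lemma mulVec_e3 {F : Type*} [Field F] (g : Matrix (Fin 5) (Fin 5) F) (i : Fin 5) :
    g.mulVec (e3 F) i = g i 2 := by
  simp [mulVec, dotProduct, Fin.sum_univ_five, e3]

lemma mulVec_e1 {F : Type*} [Field F] (g : Matrix (Fin 5) (Fin 5) F) (i : Fin 5) :
    g.mulVec (e1 F) i = g i 0 := by
  simp [mulVec, dotProduct, Fin.sum_univ_five, e1]

/-- Elements of `P` preserve the hyperplane orthogonal to `e₁`, which contains `e₃`. -/
lemma Pset_last {F : Type*} [Field F] {q : Matrix (Fin 5) (Fin 5) F} (hq : q ∈ Pset F) :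
    q 4 2 = 0 := by
  obtain ⟨hq, c, hc⟩ := hq
  have hcol : ∀ i, q i 0 = c * e1 F i := fun i => by
    rw [← mulVec_e1 q i, hc]; rfl
  have h1 := hcol 1
  have h2 := hcol 2
  have h3 := hcol 3
  have h4 := hcol 4
  simp [e1] at h1 h2 h3 h4
  have ha := SO32_entry hq 0 2
  have hb := SO32_entry hq 0 4
  simp [h1, h2, h3, h4, J5] at ha hb
  rcases ha with h | h
  · simp [h] at hb
  · exact h

lemma nmat_mem {F : Type*} [Field F] (h2 : (2 : F) ≠ 0) (x y z : F) :
    nmat x y z 0 ∈ SO32 F := by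
  constructor
  · ext i j
    fin_cases i <;> fin_cases j <;>
      simp [nmat, Matrix.mul_apply, Fin.sum_univ_five, J5] <;> field_simp <;> ring
  · simp [nmat, det_succ_row_zero, Fin.sum_univ_succ, Fin.succAbove]

lemma amat_mem {F : Type*} [Field F] {a : F} (ha : a ≠ 0) : amat a ∈ SO32 F := by
  constructor
  · ext i j
    fin_cases i <;> fin_cases j <;>
      simp [amat, Matrix.mul_apply, Fin.sum_univ_five, J5, Matrix.diagonal_apply, ha]
  · simp [amat, det_diagonal, Fin.prod_univ_five, ha]

lemma gamma0_mem {F : Type*} [Field F] (h2 : (2 : F) ≠ 0) : gamma0 F ∈ SO32 F := by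
  have h4 : (4 : F) ≠ 0 := by
    have : (4 : F) = 2 * 2 := by norm_num
    rw [this]; exact mul_ne_zero h2 h2
  have hγ : gamma0 F = !![1/2, 0, 1/2, 0, -(1/4);
      0, 1, 0, 0, 0;
      -1, 0, 0, 0, -(1/2);
      0, 0, 0, 1, 0;
      -1, 0, 1, 0, 1/2] := by
    ext i j
    fin_cases i <;> fin_cases j <;> simp [gamma0]
  rw [hγ]
  constructor
  · ext i j
    fin_cases i <;> fin_cases j <;>
      simp [Matrix.mul_apply, Fin.sum_univ_five, J5] <;> field_simp <;> ring
  · simp [det_succ_row_zero, Fin.sum_univ_succ, Fin.succAbove]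
    field_simp
    ring

/-- The coordinates of `n a_α γ₀ e₃`. -/
lemma NAgamma_e3 {F : Type*} [Field F] (x y z a : F) :
    (nmat x y z 0 * amat a * gamma0 F).mulVec (e3 F) =
      ![a / 2 + (-(x * z) - y ^ 2 / 2) * a⁻¹, x * a⁻¹, y * a⁻¹, z * a⁻¹, a⁻¹] := by
  rw [← mulVec_mulVec, ← mulVec_mulVec]
  ext i
  fin_cases i <;>
    simp [nmat, amat, gamma0, e3, mulVec, dotProduct, Fin.sum_univ_five, Matrix.diagonal_apply] <;>
    ring

/-- The Gram matrix of the ternary form `2xz + y²` cut out by `J` on the coordinates `1, 2, 3`. -/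
def J3 (F : Type*) [Field F] : Matrix (Fin 3) (Fin 3) F :=
  !![0, 0, 1; 0, 1, 0; 1, 0, 0]

/-- `SO(2,1)` acts transitively on the vectors of norm one: some isometry of determinant one has
the given vector as its middle column. The other two columns span the two isotropic lines
orthogonal to that vector. -/
lemma exists_ternary {F : Type*} [Field F] (h2 : (2 : F) ≠ 0) (a b c : F)
    (h : 2 * a * c + b ^ 2 = 1) :
    ∃ A : Matrix (Fin 3) (Fin 3) F, Aᵀ * J3 F * A = J3 F ∧ A.det = 1 ∧
      A 0 1 = a ∧ A 1 1 = b ∧ A 2 1 = c := by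
  have h4 : (4 : F) ≠ 0 := by
    have : (4 : F) = 2 * 2 := by norm_num
    rw [this]; exact mul_ne_zero h2 h2
  by_cases hc : c = 0
  · subst hc
    have hb : (b - 1) * (b + 1) = 0 := by linear_combination h
    rcases mul_eq_zero.mp hb with hb | hb
    · obtain rfl : b = 1 := by linear_combination hb
      refine ⟨!![1, a, -a ^ 2 / 2; 0, 1, -a; 0, 0, 1], ?_, ?_, by simp, by simp, by simp⟩
      · ext i j
        fin_cases i <;> fin_cases j <;>
          simp [Matrix.mul_apply, Fin.sum_univ_three, J3] <;> field_simp <;> ring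
      · simp [det_fin_three]
    · obtain rfl : b = -1 := by linear_combination hb
      refine ⟨!![-a ^ 2 / 2, a, 1; a, -1, 0; 1, 0, 0], ?_, ?_, by simp, by simp, by simp⟩
      · ext i j
        fin_cases i <;> fin_cases j <;>
          simp [Matrix.mul_apply, Fin.sum_univ_three, J3] <;> field_simp <;> ring
      · simp [det_fin_three]
  · have ha : a = (1 - b ^ 2) / (2 * c) := by
      field_simp
      linear_combination h
    subst ha
    refine ⟨!![(1 + b) ^ 2 / 4, (1 - b ^ 2) / (2 * c), -(1 - b) ^ 2 / (2 * c ^ 2);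
        -c * (1 + b) / 2, b, -(1 - b) / c;
        -c ^ 2 / 2, c, 1], ?_, ?_, by simp, by simp, by simp⟩
    · ext i j
      fin_cases i <;> fin_cases j <;>
        simp [Matrix.mul_apply, Fin.sum_univ_three, J3] <;> field_simp <;> ring
    · simp [det_fin_three]
      field_simp
      ring

/-- `P` acts transitively on the vectors of norm one orthogonal to `e₁`. -/
lemma exists_Pset_mulVec_e3 {F : Type*} [Field F] (h2 : (2 : F) ≠ 0) (t a b c : F)
    (h : 2 * a * c + b ^ 2 = 1) :
    ∃ q ∈ Pset F, q.mulVec (e3 F) = ![t, a, b, c, 0] := by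
  obtain ⟨A, hA, hd, rfl, rfl, rfl⟩ := exists_ternary h2 a b c h
  have hE : ∀ i j, A 2 i * A 0 j + A 1 i * A 1 j + A 0 i * A 2 j = J3 F i j := fun i j => by
    rw [← congrFun (congrFun hA i) j]
    simp [Matrix.mul_apply, Fin.sum_univ_three, J3]
  have h00 := hE 0 0
  have h01 := hE 0 1
  have h02 := hE 0 2
  have h11 := hE 1 1
  have h12 := hE 1 2
  have h22 := hE 2 2
  simp [J3] at h00 h01 h02 h11 h12 h22
  rw [det_fin_three] at hd
  -- The Levi element `diag(1, A, 1)` multiplied by the unipotent element of `P` with parameter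
  -- `-t w`, where `w = (a, b, c)`: as `Q(w) = 1`, it adds `t` to the first coordinate of `w`.
  refine ⟨!![1, 0, t, 0, -t ^ 2 / 2;
      0, A 0 0, A 0 1, A 0 2, -t * A 0 1;
      0, A 1 0, A 1 1, A 1 2, -t * A 1 1;
      0, A 2 0, A 2 1, A 2 2, -t * A 2 1;
      0, 0, 0, 0, 1], ⟨⟨?_, ?_⟩, 1, ?_⟩, ?_⟩
  · ext i j
    fin_cases i <;> fin_cases j <;>
      simp [Matrix.mul_apply, Fin.sum_univ_five, J5] <;> field_simp <;> grind
  · simp [det_succ_row_zero, Fin.sum_univ_succ, Fin.succAbove]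
    linear_combination hd
  · ext i
    fin_cases i <;> simp [e1, mulVec, dotProduct, Fin.sum_univ_five]
  · ext i
    fin_cases i <;> simp [e3, mulVec, dotProduct, Fin.sum_univ_five]

/-- the disjoint double coset decomposition `G = P·C ⊔ N·A·γ₀·C`
(split case). -/
theorem stmt_4 {F : Type*} [Field F] (h2 : (2 : F) ≠ 0) :
    ∀ g ∈ SO32 F,
      ((g ∈ {x | ∃ q ∈ Pset F, ∃ h ∈ Cset F, x = q * h}) ∨
       (g ∈ {x | ∃ x₁ x₂ x₃ α : F, α ≠ 0 ∧ ∃ h ∈ Cset F,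
          x = nmat x₁ x₂ x₃ 0 * amat α * gamma0 F * h}))
      ∧ ¬((g ∈ {x | ∃ q ∈ Pset F, ∃ h ∈ Cset F, x = q * h}) ∧
          (g ∈ {x | ∃ x₁ x₂ x₃ α : F, α ≠ 0 ∧ ∃ h ∈ Cset F,
            x = nmat x₁ x₂ x₃ 0 * amat α * gamma0 F * h})) := by
  intro g hg
  refine ⟨?_, ?_⟩
  · have hn := SO32_entry hg 2 2
    simp [J5] at hn
    by_cases hv : g 4 2 = 0
    · left
      rw [hv] at hn
      obtain ⟨q, hq, hqe⟩ := exists_Pset_mulVec_e3 h2 (g 0 2) (g 1 2) (g 2 2) (g 3 2)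
        (by linear_combination hn)
      have hqg : q.mulVec (e3 F) = g.mulVec (e3 F) := by
        rw [hqe]
        ext i
        rw [mulVec_e3]
        fin_cases i <;> simp [hv]
      obtain ⟨k, hk, hgk⟩ := exists_Cset_of_mulVec_eq hg hq.1 hqg
      exact ⟨q, hq, k, hk, hgk⟩
    · right
      refine ⟨g 1 2 / g 4 2, g 2 2 / g 4 2, g 3 2 / g 4 2, (g 4 2)⁻¹, inv_ne_zero hv, ?_⟩
      refine exists_Cset_of_mulVec_eq hg
        (SO32_mul (SO32_mul (nmat_mem h2 _ _ _) (amat_mem (inv_ne_zero hv))) (gamma0_mem h2)) ?_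
      rw [NAgamma_e3]
      ext i
      rw [mulVec_e3]
      fin_cases i <;> simp <;> field_simp
      linear_combination -hn
  · rintro ⟨⟨q, hq, h, hh, rfl⟩, x, y, z, a, ha, k, hk, he⟩
    have hv := congrFun (congrArg (fun m => m.mulVec (e3 F)) he) 4
    simp only [← mulVec_mulVec _ _ h, ← mulVec_mulVec _ _ k, hh.2, hk.2, NAgamma_e3] at hv
    rw [mulVec_e3, Pset_last hq] at hv
    simp at hv
    exact ha hv.symm

end
end

section
/- Let q > 1 be a real number, X ∈ ℂ with X ≠ 0 and X² ≠ 1, and ε ∈ {1, −1}. Define c₊ = (q^{3/2}X − 1)(1 − ε·q^{−1/2}X⁻¹)/((X − X⁻¹)(q^{3/2} − ε·q^{−1/2})), c₋ = −(q^{3/2}X⁻¹ − 1)(1 − ε·q^{−1/2}X)/((X − X⁻¹)(q^{3/2} − ε·q^{−1/2})); set T₀ = 1 and T_k = c₊·(q^{−3/2}X)^k + c₋·(q^{−3/2}X⁻¹)^k for k ≥ 1; set Λ₀ = 1 and Λ_k = q^{3k}(1 − ε·q^{−2}) for k ≥ 1. Then for every integer r ≥ 0: Σ_{k=0}^{r}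 T_k·Λ_k = q^r·[ q^{r/2}·(X^{r+1} − X^{−(r+1)}) − ε·q^{(r−1)/2}·(X^r − X^{−r}) ] / (X − X⁻¹). -/
/-!
Writing `q = s²`, the closed form on the right is
`F r = s^{3r} (X^{r+1} - X^{-(r+1)} - ε s⁻¹ (X^r - X^{-r})) / (X - X⁻¹)`, and the sum telescopes.
Since `1 - ε s⁻⁴ = s⁻³ (s³ - ε s⁻¹)`, the volume factor `1 - ε q⁻²` cancels the factor
`s³ - ε s⁻¹` in the denominators of `c₊` and `c₋`, and expanding the products
`(s³ X^{±1} - 1)(1 - ε s⁻¹ X^{∓1})` gives `T k * Λ k = F k - F (k - 1)` for `k ≥ 1`.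
The only analytic input is `s > 1`, which guarantees `s³ ≠ ε s⁻¹`.
-/


/-- evaluation of `Σ_{k=0}^r T_k·Λ_k = ∫_S Φ_r·T_ζ ds`. Here `s = √q`,
so `s^j = q^{j/2}`; `ε = 1` is the split case and `ε = −1` the non-split case. -/
theorem stmt_11 (q : ℝ) (hq : 1 < q) (X ε : ℂ) (hX0 : X ≠ 0) (hX1 : X ^ 2 ≠ 1)
    (hε : ε = 1 ∨ ε = -1)
    (s : ℂ) (hs : s = ((Real.sqrt q : ℝ) : ℂ))
    (cP cM : ℂ)
    (hcP : cP = (s ^ 3 * X - 1) * (1 - ε * s⁻¹ * X⁻¹)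
                  / ((X - X⁻¹) * (s ^ 3 - ε * s⁻¹)))
    (hcM : cM = -((s ^ 3 * X⁻¹ - 1) * (1 - ε * s⁻¹ * X)
                  / ((X - X⁻¹) * (s ^ 3 - ε * s⁻¹))))
    (T Λ : ℕ → ℂ) (hT0 : T 0 = 1)
    (hT : ∀ k : ℕ, 1 ≤ k →
      T k = cP * ((s ^ 3)⁻¹ * X) ^ k + cM * ((s ^ 3)⁻¹ * X⁻¹) ^ k)
    (hΛ0 : Λ 0 = 1)
    (hΛ : ∀ k : ℕ, 1 ≤ k → Λ k = (q : ℂ) ^ (3 * k) * (1 - ε * ((q : ℂ) ^ 2)⁻¹)) :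
    ∀ r : ℕ,
      ∑ k ∈ Finset.range (r + 1), T k * Λ k
        = (q : ℂ) ^ r *
            (s ^ r * (X ^ (r + 1) - (X⁻¹) ^ (r + 1))
              - ε * s ^ ((r : ℤ) - 1) * (X ^ r - (X⁻¹) ^ r))
          / (X - X⁻¹) := by
  have hs1 : 1 < Real.sqrt q := Real.lt_sqrt_of_sq_lt (by simpa using hq)
  have hsq : (q : ℂ) = s ^ 2 := by
    rw [hs, ← Complex.ofReal_pow, Real.sq_sqrt (by linarith)]
  have hs0 : s ≠ 0 := by
    rw [hs, Complex.ofReal_ne_zero]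
    linarith
  have hs4 : s ^ 4 ≠ ε := by
    have h4 : 1 < Real.sqrt q ^ 4 := one_lt_pow₀ hs1 (by norm_num)
    intro h
    rw [hs] at h
    rcases hε with rfl | rfl
    · have h' : Real.sqrt q ^ 4 = 1 := by exact_mod_cast h
      linarith
    · have h' : Real.sqrt q ^ 4 = -1 := by exact_mod_cast h
      linarith
  have hE : s ^ 3 - ε * s⁻¹ ≠ 0 := by
    intro h
    apply hs4
    field_simp at h
    linear_combination h
  have hD : X - X⁻¹ ≠ 0 := by
    intro h
    apply hX1
    field_simp at h
    linear_combination h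
  have hXY : X * X⁻¹ = 1 := mul_inv_cancel₀ hX0
  have hvol : 1 - ε * ((q : ℂ) ^ 2)⁻¹ = (s ^ 3 - ε * s⁻¹) * (s ^ 3)⁻¹ := by
    rw [hsq]
    field_simp
  intro r
  induction r with
  | zero => simp [hT0, hΛ0, hD]
  | succ n ih =>
    have hc : (s ^ 6) ^ (n + 1) * ((s ^ 3)⁻¹) ^ (n + 1) = s ^ (3 * n) * s ^ 3 := by
      rw [← mul_pow, show s ^ 6 * (s ^ 3)⁻¹ = s ^ 3 by field_simp, ← pow_mul, ← pow_add]
      ring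
    -- The normalised term, after the volume factor has cancelled against the denominators.
    have hterm : T (n + 1) * Λ (n + 1) = s ^ (3 * n) *
        ((s ^ 3 * X - 1) * (1 - ε * s⁻¹ * X⁻¹) * X ^ (n + 1)
          - (s ^ 3 * X⁻¹ - 1) * (1 - ε * s⁻¹ * X) * X⁻¹ ^ (n + 1)) / (X - X⁻¹) := by
      have hP : cP * (s ^ 3 - ε * s⁻¹)
          = (s ^ 3 * X - 1) * (1 - ε * s⁻¹ * X⁻¹) / (X - X⁻¹) := by
        rw [hcP, div_mul_eq_mul_div, mul_div_mul_right _ _ hE]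
      have hM : cM * (s ^ 3 - ε * s⁻¹)
          = -((s ^ 3 * X⁻¹ - 1) * (1 - ε * s⁻¹ * X) / (X - X⁻¹)) := by
        rw [hcM, neg_mul, div_mul_eq_mul_div, mul_div_mul_right _ _ hE]
      have hs3 : s ^ 3 * (s ^ 3)⁻¹ = 1 := mul_inv_cancel₀ (pow_ne_zero _ hs0)
      rw [hT _ (by omega), hΛ _ (by omega), hvol, hsq, mul_pow, mul_pow, ← pow_mul,
        show 2 * (3 * (n + 1)) = 6 * (n + 1) by ring, pow_mul s 6]
      calc _ = ((s ^ 6) ^ (n + 1) * ((s ^ 3)⁻¹) ^ (n + 1)) * (s ^ 3)⁻¹ *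
            (cP * (s ^ 3 - ε * s⁻¹) * X ^ (n + 1)
              + cM * (s ^ 3 - ε * s⁻¹) * X⁻¹ ^ (n + 1)) := by
            generalize (s ^ 3)⁻¹ = u
            ring
        _ = s ^ (3 * n) * (s ^ 3 * (s ^ 3)⁻¹) *
            (cP * (s ^ 3 - ε * s⁻¹) * X ^ (n + 1)
              + cM * (s ^ 3 - ε * s⁻¹) * X⁻¹ ^ (n + 1)) := by
            rw [hc]
            ring
        _ = _ := by
            rw [hs3, hP, hM]
            ring
    rw [Finset.sum_range_succ, ih, hterm, hsq, ← add_div]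
    congr 1
    rw [zpow_sub_one₀ hs0, zpow_sub_one₀ hs0, zpow_natCast, zpow_natCast]
    generalize X⁻¹ = Y at hXY ⊢
    generalize s⁻¹ = t
    have e : (s ^ 2) ^ n * s ^ n = s ^ (3 * n) := by
      rw [← pow_mul, ← pow_add]
      ring
    have e1 : (s ^ 2) ^ (n + 1) * s ^ (n + 1) = s ^ (3 * n) * s ^ 3 := by
      rw [← pow_mul, ← pow_add, ← pow_add]
      ring
    calc _ = ((s ^ 2) ^ n * s ^ n) * (X ^ (n + 1) - Y ^ (n + 1) - ε * t * (X ^ n - Y ^ n))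
          + s ^ (3 * n) * ((s ^ 3 * X - 1) * (1 - ε * t * Y) * X ^ (n + 1)
            - (s ^ 3 * Y - 1) * (1 - ε * t * X) * Y ^ (n + 1)) := by ring
      _ = s ^ (3 * n) * s ^ 3 *
          (X ^ (n + 1 + 1) - Y ^ (n + 1 + 1) - ε * t * (X ^ (n + 1) - Y ^ (n + 1))) := by
          rw [e]
          simp only [pow_succ X, pow_succ Y]
          generalize X ^ n = a
          generalize Y ^ n = b
          generalize s ^ (3 * n) = p
          linear_combination p * ε * t * (a - b - s ^ 3 * X * a + s ^ 3 * Y * b) * hXY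
      _ = _ := by
          rw [← e1]
          ring
end

section
/- Let p be an odd prime, ψ an additive character of ℚ_p of conductor ℤ_p, χ : ℚ_pˣ → ℂˣ a multiplicative character, and r ≥ 1 an integer. For (x₁,x₂,x₃) ∈ ℚ_p³ put u = 1 − x₂² − 2x₁x₃, and define I(x₁,x₂,x₃) = ∫_{{α : p^{−r} ≤ ‖α‖ ≤ p^r·‖u‖⁻¹}} ‖α‖³·ψ(α·x₂)·χ(α) d^×α when u ≠ 0, and I(x₁,x₂,x₃) = 0 when u = 0. Then the iterated integral ∫_{‖x₁‖≤p^r} ∫_{‖x₃‖≤p^r} ∫_{‖x₂‖≤p^r} I(x₁,x₂,x₃) dx₂ dx₃ dx₁ equals: p·X^{1−r} + X^{−r} if χ is unramified with X = χ(p)⁻¹; and 0 if χ is ramified. -/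
/-!
The integral over `α` is decomposed into shells `‖α‖ = p ^ k`, with contribution
`G k x₂ = ∫_{‖α‖ = p ^ k} ‖α‖² ψ(α x₂) χ(α) dα`. The shell `k` is admissible at `(x₁, x₂, x₃)` exactly
when `k ≥ -r` and `x₂` lies in the slice `‖t - x₂²‖ ≤ p ^ (r - k)`, where `t = 1 - 2 x₁ x₃`. The
integral of `I` over `x₂` is therefore a function `J t` of `t` alone.

If every `G k x` is zero, then `I` vanishes identically; this also disposes of characters `χ` with
no regularity. Otherwise `χ` is trivial on some `1 + p ^ n ℤ_p` (`exists_level`), and three facts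
about `G` carry the computation:
* `G k` is invariant under translation by the ball of radius `p ^ (-k)` (`G_add_small`);
* `G k x = 0` for `‖x‖ > p ^ (n - k)`, by oscillation of `ψ` (`G_vanish`);
* `G k` has mean zero over every coset of the ball of radius `p ^ (1 - k)` (`G_average`).

The second fact makes `J t` a finite sum over shells (`J_eq_sum`). If `‖t‖ < p ^ (2 r)`, the slices
with `k ≥ 2 - r` are invariant under translation by the ball of radius `p ^ (1 - k)`, so by the third
fact only `k = -r` and `k = 1 - r` survive (`J_eq_two`); for these shells the slices are balls, on
which `G k` is constant, so `J t` is a combination of `G (-r) 0` and `G (1 - r) 0` that does not depend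
on `t` (`J_small`). This applies for all `x₃` when `‖x₁‖ < p ^ r`. It remains to treat
`‖x₁‖ = p ^ r`, where `p ≠ 2` enters through `‖2 x₁‖ = p ^ r`.

* Unramified `χ`: again only the two shells survive. The shell `k = -r` contributes as before, and
  exchanging the integrals over `x₂` and `x₃` shows, by the third fact, that the shell `k = 1 - r`
  contributes nothing (`integral_second_shell`). Inserting the explicit values of `G k 0`
  (`G_unramified`), the shell `k = -r` gives `X ^ (-r)` and the shell `k = 1 - r` gives
  `p X ^ (1 - r)`.
* Ramified `χ`, with `u` a unit such that `χ(u) ≠ 1`: the substitution `α ↦ u α` gives `G k 0 = 0`,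
  which handles `‖x₁‖ < p ^ r`. It also gives `χ(u) J(u² t) = J t`; for `‖x₁‖ = p ^ r` the map
  `t ↦ u² t` is induced by a measure-preserving affine map of the ball `‖x₃‖ ≤ p ^ r`, so the integral
  over `x₃` vanishes (`integral_J_ramified`).
-/

open MeasureTheory

noncomputable section

variable (p : ℕ) [Fact p.Prime]

instance : MeasurableSpace ℚ_[p] := borel _
instance : BorelSpace ℚ_[p] := ⟨rfl⟩

namespace PadicMellin

section Helpers

variable {p}

/-! ### Balls, shells and Haar measure on `ℚ_[p]` -/

/-- The closed ball of radius `p ^ k` around `0`. -/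
def pBall (p : ℕ) [Fact p.Prime] (k : ℤ) : Set ℚ_[p] := {y | ‖y‖ ≤ (p : ℝ) ^ k}

/-- The sphere of radius `p ^ k` around `0`. -/
def pShell (p : ℕ) [Fact p.Prime] (k : ℤ) : Set ℚ_[p] := {y | ‖y‖ = (p : ℝ) ^ k}

lemma one_lt_p : (1 : ℝ) < p := mod_cast (Fact.out : p.Prime).one_lt

lemma p_pos : (0 : ℝ) < p := zero_lt_one.trans one_lt_p

lemma zpow_le_iff {a b : ℤ} : (p : ℝ) ^ a ≤ (p : ℝ) ^ b ↔ a ≤ b :=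
  zpow_le_zpow_iff_right₀ one_lt_p

lemma add_le_of {x y : ℚ_[p]} {c : ℝ} (hx : ‖x‖ ≤ c) (hy : ‖y‖ ≤ c) : ‖x + y‖ ≤ c :=
  (IsUltrametricDist.norm_add_le_max x y).trans (max_le hx hy)

lemma sub_le_of {x y : ℚ_[p]} {c : ℝ} (hx : ‖x‖ ≤ c) (hy : ‖y‖ ≤ c) : ‖x - y‖ ≤ c := by
  rw [sub_eq_add_neg]; exact add_le_of hx (by rwa [norm_neg])

lemma norm_add_le_iff {x y : ℚ_[p]} {c : ℝ} (hy : ‖y‖ ≤ c) : ‖x + y‖ ≤ c ↔ ‖x‖ ≤ c :=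
  ⟨fun h => by simpa using sub_le_of h hy, fun h => add_le_of h hy⟩

lemma exists_norm_eq_zpow {x : ℚ_[p]} (hx : x ≠ 0) : ∃ m : ℤ, ‖x‖ = (p : ℝ) ^ m :=
  ⟨_, Padic.norm_eq_zpow_neg_valuation hx⟩

lemma lt_zpow_iff {x : ℚ_[p]} {n : ℤ} : ‖x‖ < (p : ℝ) ^ n ↔ ‖x‖ ≤ (p : ℝ) ^ (n - 1) :=
  Padic.norm_lt_pow_iff_norm_le_pow_sub_one x n

lemma norm_pz (k : ℤ) : ‖(p : ℚ_[p]) ^ (-k)‖ = (p : ℝ) ^ k := by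
  rw [Padic.norm_p_zpow, neg_neg]

lemma natCast_le_one (j : ℕ) : ‖(j : ℚ_[p])‖ ≤ 1 := by
  simpa using Padic.norm_int_le_one (p := p) (j : ℤ)

lemma mul_le_zpow {x y : ℚ_[p]} {a b c : ℤ} (hx : ‖x‖ ≤ (p : ℝ) ^ a) (hy : ‖y‖ ≤ (p : ℝ) ^ b)
    (h : a + b ≤ c) : ‖x * y‖ ≤ (p : ℝ) ^ c := by
  rw [norm_mul]
  calc ‖x‖ * ‖y‖ ≤ (p : ℝ) ^ a * (p : ℝ) ^ b := by gcongr
    _ = (p : ℝ) ^ (a + b) := (zpow_add₀ p_pos.ne' _ _).symm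
    _ ≤ _ := zpow_le_iff.2 h

/-- Taking square roots of norm bounds, using that norms are integral powers of `p`. -/
lemma le_of_sq_le {x : ℚ_[p]} {a b : ℤ} (h : ‖x ^ 2‖ ≤ (p : ℝ) ^ a) (hab : a ≤ 2 * b + 1) :
    ‖x‖ ≤ (p : ℝ) ^ b := by
  by_cases hx : x = 0
  · simpa [hx] using (zpow_pos p_pos b).le
  obtain ⟨m, hm⟩ := exists_norm_eq_zpow hx
  rw [norm_pow, hm, ← zpow_natCast, ← zpow_mul, zpow_le_iff] at h
  rw [hm, zpow_le_iff]
  push_cast at h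
  omega

lemma isCompact_pBall (k : ℤ) : IsCompact (pBall p k) := by
  have : pBall p k = Metric.closedBall 0 ((p : ℝ) ^ k) := by
    ext; simp [pBall]
  rw [this]; exact isCompact_closedBall _ _

lemma isClosed_pShell (k : ℤ) : IsClosed (pShell p k) := isClosed_eq continuous_norm continuous_const

lemma measurableSet_pBall (k : ℤ) : MeasurableSet (pBall p k) := (isCompact_pBall k).measurableSet

lemma measurableSet_pShell (k : ℤ) : MeasurableSet (pShell p k) := (isClosed_pShell k).measurableSet

lemma isCompact_pShell (k : ℤ) : IsCompact (pShell p k) :=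
  (isCompact_pBall k).of_isClosed_subset (isClosed_pShell k) fun _ h => le_of_eq h

/-- A function invariant under translation by a ball is continuous. -/
lemma continuous_of_invariant {f : ℚ_[p] → ℂ} (k : ℤ)
    (h : ∀ x y, ‖y‖ ≤ (p : ℝ) ^ k → f (x + y) = f x) : Continuous f := by
  rw [continuous_iff_continuousAt]
  intro x
  apply ContinuousAt.congr (f := fun _ => f x) continuousAt_const
  filter_upwards [Metric.closedBall_mem_nhds x (zpow_pos (p_pos (p := p)) k)] with z hz
  have := h x (z - x) (by simpa [dist_eq_norm] using hz)
  simpa using this.symm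

lemma exists_digit {x : ℚ_[p]} {k : ℤ} (hx : ‖x‖ ≤ (p : ℝ) ^ k) {y : ℚ_[p]}
    (hy : ‖y‖ = (p : ℝ) ^ k) : ∃ j < p, ‖x - j * y‖ ≤ (p : ℝ) ^ (k - 1) := by
  have hy0 : y ≠ 0 := by
    rintro rfl; rw [norm_zero] at hy; exact (zpow_pos (p_pos (p := p)) k).ne hy
  have h1 : ‖x / y‖ ≤ 1 := by
    rw [norm_div, hy]; exact div_le_one_of_le₀ hx (zpow_pos p_pos k).le
  obtain ⟨z, hz⟩ : ∃ z : ℤ_[p], (z : ℚ_[p]) = x / y := ⟨⟨x / y, h1⟩, rfl⟩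
  obtain ⟨j, hj, hm⟩ := PadicInt.exists_mem_range z
  refine ⟨j, hj, ?_⟩
  rw [← lt_zpow_iff]
  have h2 : ‖x / y - j‖ < 1 := by
    have := PadicInt.mem_nonunits.1 ((IsLocalRing.mem_maximalIdeal _).1 hm)
    rw [PadicInt.norm_def, PadicInt.coe_sub, PadicInt.coe_natCast, hz] at this
    exact this
  have h3 : x - j * y = (x / y - j) * y := by field_simp
  rw [h3, norm_mul, hy]
  exact mul_lt_of_lt_one_left (zpow_pos p_pos k) h2

section Measure

variable (μ : Measure ℚ_[p]) [μ.IsAddHaarMeasure]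

lemma pBall_lt_top (k : ℤ) : μ (pBall p k) < ⊤ := (isCompact_pBall k).measure_lt_top

/-- `pBall (k+1)` is the disjoint union of `p` translates of `pBall k`. -/
lemma measure_pBall_succ (k : ℤ) : μ.real (pBall p (k + 1)) = p * μ.real (pBall p k) := by
  set y : ℚ_[p] := (p : ℚ_[p]) ^ (-(k + 1)) with hy
  have hyn : ‖y‖ = (p : ℝ) ^ (k + 1) := norm_pz _
  have hU : pBall p (k + 1) = ⋃ j ∈ Finset.range p, (fun x => x + -(j * y)) ⁻¹' pBall p k := by
    ext x
    simp only [Set.mem_iUnion, Finset.mem_range, Set.mem_preimage, pBall, Set.mem_ofPred_eq,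
      exists_prop]
    constructor
    · intro h
      obtain ⟨j, hj, h⟩ := exists_digit h hyn
      exact ⟨j, hj, by simpa [sub_eq_add_neg] using h⟩
    · rintro ⟨j, hj, h⟩
      have : ‖(j : ℚ_[p]) * y‖ ≤ (p : ℝ) ^ (k + 1) :=
        mul_le_zpow (a := 0) (by simpa using natCast_le_one j) hyn.le (by omega)
      rw [← norm_add_le_iff (y := -((j : ℚ_[p]) * y)) (by rwa [norm_neg])]
      exact h.trans (zpow_le_iff.2 (by omega))
  rw [hU, measureReal_biUnion_finset (h := fun j _ => by
    rw [measure_preimage_add_right]; exact (pBall_lt_top μ k).ne)]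
  · simp [measureReal_def, measure_preimage_add_right]
  · intro i hi j hj hij
    rw [Function.onFun, Set.disjoint_left]
    intro x h1 h2
    simp only [Set.mem_preimage, pBall, Set.mem_ofPred_eq] at h1 h2
    have h3 := sub_le_of h1 h2
    have h4 : x + -(i * y) - (x + -(j * y)) = ((j - i : ℤ) : ℚ_[p]) * y := by push_cast; ring
    rw [h4, norm_mul, hyn] at h3
    have h5 : ‖((j - i : ℤ) : ℚ_[p])‖ < 1 := by
      by_contra hc
      push Not at hc
      have : (p : ℝ) ^ (k + 1) ≤ (p : ℝ) ^ k :=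
        (le_mul_of_one_le_left (zpow_pos p_pos _).le hc).trans h3
      rw [zpow_le_iff] at this
      omega
    rw [Padic.norm_intCast_lt_one_iff] at h5
    simp only [Finset.coe_range, Set.mem_Iio] at hi hj
    obtain ⟨c, hc⟩ := h5
    apply hij
    have h6 : ((j : ℤ) - i).natAbs < p := by omega
    have := Int.eq_zero_of_abs_lt_dvd ⟨c, hc⟩ (by rw [abs_lt]; omega)
    omega
  · intro j _
    exact (continuous_id.add continuous_const).measurable (measurableSet_pBall k)

variable {μ}

lemma measure_pBall (hμ : μ {x : ℚ_[p] | ‖x‖ ≤ 1} = 1) (k : ℤ) :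
    μ.real (pBall p k) = (p : ℝ) ^ k := by
  induction k using Int.induction_on with
  | zero => simp [measureReal_def, pBall, hμ]
  | succ k ih => rw [measure_pBall_succ, ih, zpow_add_one₀ p_pos.ne', mul_comm]
  | pred k ih =>
    have := measure_pBall_succ μ (-(k : ℤ) - 1)
    rw [sub_add_cancel, ih] at this
    rw [zpow_sub_one₀ p_pos.ne', this]
    field_simp [(p_pos (p := p)).ne']

lemma pShell_eq (k : ℤ) : pShell p k = pBall p k \ pBall p (k - 1) := by
  ext x
  simp only [pShell, pBall, Set.mem_sdiff, Set.mem_ofPred_eq, ← lt_zpow_iff, not_lt]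
  exact le_antisymm_iff

lemma measure_pShell (hμ : μ {x : ℚ_[p] | ‖x‖ ≤ 1} = 1) (k : ℤ) :
    μ.real (pShell p k) = (p : ℝ) ^ k * (1 - 1 / p) := by
  rw [pShell_eq, measureReal_sdiff ?_ (measurableSet_pBall _) (pBall_lt_top _ _).ne,
    measure_pBall hμ, measure_pBall hμ, zpow_sub_one₀ p_pos.ne']
  · ring
  · intro x hx
    exact le_trans hx (zpow_le_iff.2 (by omega))

omit [μ.IsAddHaarMeasure] in
/-- Change of variables for set integrals along a measure-preserving homeomorphism preserving the
set; no measurability or integrability is needed. -/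
lemma setIntegral_comp {e : ℚ_[p] ≃ₜ ℚ_[p]} (he : MeasurePreserving e μ μ) {S : Set ℚ_[p]}
    (hS : ∀ x, e x ∈ S ↔ x ∈ S) (f : ℚ_[p] → ℂ) :
    ∫ x in S, f (e x) ∂μ = ∫ x in S, f x ∂μ := by
  have h := he.setIntegral_preimage_emb e.measurableEmbedding f S
  have : e ⁻¹' S = S := Set.ext hS
  rwa [this] at h

lemma setIntegral_add {S : Set ℚ_[p]} {y : ℚ_[p]}
    (hS : ∀ x, x + y ∈ S ↔ x ∈ S) (f : ℚ_[p] → ℂ) :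
    ∫ x in S, f (x + y) ∂μ = ∫ x in S, f x ∂μ :=
  setIntegral_comp (e := Homeomorph.addRight y) (measurePreserving_add_right μ y) hS f

/-- Multiplication by a `p`-adic unit preserves Haar measure: it preserves it up to a scalar,
and it fixes the unit ball. -/
lemma measurePreserving_unit (hμ : μ {x : ℚ_[p] | ‖x‖ ≤ 1} = 1) {u : ℚ_[p]} (hu : ‖u‖ = 1) :
    MeasurePreserving (fun x => u * x) μ μ := by
  have hu0 : u ≠ 0 := by rintro rfl; simp at hu
  have hc : Continuous fun x : ℚ_[p] => u * x := continuous_const.mul continuous_id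
  refine ⟨hc.measurable, ?_⟩
  have hH : (Measure.map (fun x => u * x) μ).IsAddHaarMeasure := by
    refine Measure.isAddHaarMeasure_map μ (AddMonoidHom.mulLeft u) hc ?_ ?_
    · intro y; exact ⟨u⁻¹ * y, by simp [hu0]⟩
    · exact (Homeomorph.mulLeft₀ u hu0).isClosedEmbedding.tendsto_cocompact
  have h := Measure.isAddLeftInvariant_eq_smul (Measure.map (fun x => u * x) μ) μ
  have h1 : Measure.map (fun x => u * x) μ {x : ℚ_[p] | ‖x‖ ≤ 1} = 1 := by
    rw [Measure.map_apply hc.measurable]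
    · simpa [hu] using hμ
    · simpa [pBall] using measurableSet_pBall (p := p) 0
  rw [h] at h1 ⊢
  rw [Measure.smul_apply, hμ] at h1
  have h2 : (Measure.map (fun x => u * x) μ).addHaarScalarFactor μ = 1 := by
    simpa [ENNReal.smul_def] using h1
  rw [h2, one_smul]

lemma setIntegral_mul (hμ : μ {x : ℚ_[p] | ‖x‖ ≤ 1} = 1) {u : ℚ_[p]} (hu : ‖u‖ = 1)
    {S : Set ℚ_[p]} (hS : ∀ x, u * x ∈ S ↔ x ∈ S) (f : ℚ_[p] → ℂ) :
    ∫ x in S, f (u * x) ∂μ = ∫ x in S, f x ∂μ :=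
  setIntegral_comp (e := Homeomorph.mulLeft₀ u (by rintro rfl; simp at hu))
    (measurePreserving_unit hμ hu) hS f

end Measure

/-! ### Additive and multiplicative characters -/

/-- `ψ` is an additive character of conductor `ℤ_p`: trivial on `ℤ_p`, but not on `p⁻¹ ℤ_p`. -/
structure IsStdAddChar (ψ : ℚ_[p] → ℂ) : Prop where
  add : ∀ x y : ℚ_[p], ψ (x + y) = ψ x * ψ y
  one : ∀ x : ℚ_[p], ‖x‖ ≤ 1 → ψ x = 1
  nt : ∃ x : ℚ_[p], ‖x‖ = (p : ℝ) ∧ ψ x ≠ 1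

/-- Multiplicativity of `χ` on nonzero elements; `χ 0` is unconstrained. -/
def IsMulChar (χ : ℚ_[p] → ℂ) : Prop := ∀ a b : ℚ_[p], a ≠ 0 → b ≠ 0 → χ (a * b) = χ a * χ b

/-- `χ` is a multiplicative character trivial on `1 + p ^ n ℤ_p`, where `n ≥ 1`. -/
structure HasLevel (χ : ℚ_[p] → ℂ) (n : ℤ) : Prop where
  mul : IsMulChar χ
  pos : 1 ≤ n
  triv : ∀ v : ℚ_[p], ‖v - 1‖ ≤ (p : ℝ) ^ (-n) → χ v = 1

section AddChar

variable {ψ : ℚ_[p] → ℂ} (hψ : IsStdAddChar ψ)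
include hψ

lemma psi_add_small {x y : ℚ_[p]} (hy : ‖y‖ ≤ 1) : ψ (x + y) = ψ x := by
  rw [hψ.add, hψ.one y hy, mul_one]

lemma psi_continuous : Continuous ψ :=
  continuous_of_invariant 0 fun _ _ hy => psi_add_small hψ (by simpa using hy)

lemma psi_nat_mul (j : ℕ) (z : ℚ_[p]) : ψ (j * z) = ψ z ^ j := by
  induction j with
  | zero => simp [hψ.one 0 (by simp)]
  | succ j ih =>
    have : ((j + 1 : ℕ) : ℚ_[p]) * z = j * z + z := by push_cast; ring
    rw [this, hψ.add, ih, pow_succ]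

/-- `ψ` is nontrivial at every element of norm `p`, since these all generate `p⁻¹ ℤ_p / ℤ_p`. -/
lemma psi_ne_one {z : ℚ_[p]} (hz : ‖z‖ = p) : ψ z ≠ 1 := by
  obtain ⟨x, hx, hx1⟩ := hψ.nt
  intro h
  obtain ⟨j, -, hj⟩ := exists_digit (x := x) (k := 1) (by simp [hx]) (y := z) (by simp [hz])
  have := psi_add_small hψ (x := j * z) (y := x - j * z) (by simpa using hj)
  rw [add_sub_cancel, psi_nat_mul hψ, h, one_pow] at this
  exact hx1 this

lemma psi_sum {z : ℚ_[p]} (hz : ‖z‖ = p) : ∑ j ∈ Finset.range p, ψ (j * z) = 0 := by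
  simp_rw [psi_nat_mul hψ]
  have h := geom_sum_mul (ψ z) p
  rw [← psi_nat_mul hψ, hψ.one (p * z), sub_self] at h
  · exact (mul_eq_zero.1 h).resolve_right (sub_ne_zero.2 (psi_ne_one hψ hz))
  · rw [norm_mul, hz, Padic.norm_p, inv_mul_cancel₀ p_pos.ne']

end AddChar

lemma ne_zero_of_mem_pShell {k : ℤ} {α : ℚ_[p]} (h : α ∈ pShell p k) : α ≠ 0 := by
  rintro rfl
  have : ‖(0 : ℚ_[p])‖ = (p : ℝ) ^ k := h
  rw [norm_zero] at this
  exact (zpow_pos (p_pos (p := p)) k).ne this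

lemma chi_add_small {χ : ℚ_[p] → ℂ} {n : ℤ} (hχ : HasLevel χ n) {α β : ℚ_[p]} (hα : α ≠ 0)
    (hβ : ‖β‖ ≤ (p : ℝ) ^ (-n) * ‖α‖) : χ (α + β) = χ α := by
  have h1 : ‖β / α‖ ≤ (p : ℝ) ^ (-n) := by
    rw [norm_div]; exact (div_le_iff₀ (norm_pos_iff.2 hα)).2 hβ
  have h2 : ‖β / α‖ < 1 := by
    refine h1.trans_lt ?_
    rw [← zpow_zero (p : ℝ), zpow_lt_zpow_iff_right₀ one_lt_p]
    have := hχ.pos; omega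
  have h3 : 1 + β / α ≠ 0 := by
    intro h
    have : β / α = -1 := by linear_combination h
    rw [this] at h2
    simp at h2
  have h4 : α + β = α * (1 + β / α) := by field_simp
  rw [h4, hχ.mul _ _ hα h3, hχ.triv (1 + β / α) (by simpa using h1), mul_one]

lemma chi_continuousAt {χ : ℚ_[p] → ℂ} {n : ℤ} (hχ : HasLevel χ n) {α : ℚ_[p]} (hα : α ≠ 0) :
    ContinuousAt χ α := by
  apply ContinuousAt.congr (f := fun _ => χ α) continuousAt_const
  have hpos : 0 < (p : ℝ) ^ (-n) * ‖α‖ := mul_pos (zpow_pos p_pos _) (norm_pos_iff.2 hα)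
  filter_upwards [Metric.closedBall_mem_nhds α hpos] with z hz
  have := chi_add_small hχ (β := z - α) hα (by simpa [dist_eq_norm] using hz)
  simpa using this.symm

/-! ### Shell integrals -/

/-- The integrand `‖α‖³ ψ(αx) χ(α)` of the Mellin transform, with the factor `‖α‖⁻¹` of the
multiplicative Haar measure. -/
def kern (ψ χ : ℚ_[p] → ℂ) (x α : ℚ_[p]) : ℂ :=
  (‖α‖ : ℂ)⁻¹ * ((‖α‖ : ℂ) ^ 3 * ψ (α * x) * χ α)

/-- The contribution of the shell `‖α‖ = p ^ k` to the Mellin transform. -/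
def G (μ : Measure ℚ_[p]) (ψ χ : ℚ_[p] → ℂ) (k : ℤ) (x : ℚ_[p]) : ℂ :=
  ∫ α in pShell p k, kern ψ χ x α ∂μ

section Shell

variable {μ : Measure ℚ_[p]} [μ.IsAddHaarMeasure] {ψ χ : ℚ_[p] → ℂ}

lemma kern_continuousOn (hψ : IsStdAddChar ψ) {n : ℤ} (hχ : HasLevel χ n) (x : ℚ_[p]) :
    ContinuousOn (kern ψ χ x) {0}ᶜ := by
  intro α hα
  have hα : α ≠ 0 := hα
  have h1 : Continuous fun α : ℚ_[p] => (‖α‖ : ℂ) := Complex.continuous_ofReal.comp continuous_norm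
  have h2 : Continuous fun α : ℚ_[p] => ψ (α * x) :=
    (psi_continuous hψ).comp (continuous_id.mul continuous_const)
  refine ContinuousAt.continuousWithinAt ?_
  refine (h1.continuousAt.inv₀ (by simpa using hα)).mul
    (((h1.pow 3).mul h2).continuousAt.mul (chi_continuousAt hχ hα))

lemma kern_integrableOn (hψ : IsStdAddChar ψ) {n : ℤ} (hχ : HasLevel χ n) (x : ℚ_[p])
    {K : Set ℚ_[p]} (hK : IsCompact K) (h0 : (0 : ℚ_[p]) ∉ K) : IntegrableOn (kern ψ χ x) K μ :=
  ((kern_continuousOn hψ hχ x).mono fun _ ha h => h0 (h ▸ ha)).integrableOn_compact hK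

omit [μ.IsAddHaarMeasure] in
lemma G_add_small (hψ : IsStdAddChar ψ) {k : ℤ} {x y : ℚ_[p]} (hy : ‖y‖ ≤ (p : ℝ) ^ (-k)) :
    G μ ψ χ k (x + y) = G μ ψ χ k x := by
  refine setIntegral_congr_fun (measurableSet_pShell k) fun α hα => ?_
  have hα : ‖α‖ = (p : ℝ) ^ k := hα
  have : ‖α * y‖ ≤ 1 := by simpa using mul_le_zpow (c := 0) hα.le hy (by omega)
  simp only [kern, mul_add, psi_add_small hψ this]

omit [μ.IsAddHaarMeasure] in
lemma G_continuous (hψ : IsStdAddChar ψ) (k : ℤ) : Continuous (G μ ψ χ k) :=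
  continuous_of_invariant (-k) fun _ _ hy => G_add_small hψ hy

lemma G_integrableOn (hψ : IsStdAddChar ψ) (k r : ℤ) : IntegrableOn (G μ ψ χ k) (pBall p r) μ :=
  (G_continuous hψ k).continuousOn.integrableOn_compact (isCompact_pBall r)

lemma kern_mul (hχ : IsMulChar χ) {u : ℚ_[p]} (hu : ‖u‖ = 1) (x α : ℚ_[p]) (hα : α ≠ 0) :
    kern ψ χ x (u * α) = χ u * kern ψ χ (u * x) α := by
  have hu0 : u ≠ 0 := by rintro rfl; simp at hu
  have h : u * α * x = α * (u * x) := by ring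
  simp only [kern, norm_mul, hu, one_mul, hχ _ _ hu0 hα, h]
  ring

/-- Scaling of integrals over unit-invariant sets, from the substitution `α ↦ u α`. -/
lemma setIntegral_kern_mul (hμ : μ {x : ℚ_[p] | ‖x‖ ≤ 1} = 1) (hχ : IsMulChar χ) {u : ℚ_[p]}
    (hu : ‖u‖ = 1) {S : Set ℚ_[p]} (hSm : MeasurableSet S) (h0 : (0 : ℚ_[p]) ∉ S)
    (hS : ∀ α, u * α ∈ S ↔ α ∈ S) (x : ℚ_[p]) :
    χ u * ∫ α in S, kern ψ χ (u * x) α ∂μ = ∫ α in S, kern ψ χ x α ∂μ := by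
  rw [← setIntegral_mul hμ hu hS (kern ψ χ x), ← integral_const_mul]
  refine setIntegral_congr_fun hSm fun α hα => ?_
  exact (kern_mul hχ hu x α (by rintro rfl; exact h0 hα)).symm

lemma G_mul (hμ : μ {x : ℚ_[p] | ‖x‖ ≤ 1} = 1) (hχ : IsMulChar χ) {u : ℚ_[p]} (hu : ‖u‖ = 1)
    (k : ℤ) (x : ℚ_[p]) : χ u * G μ ψ χ k (u * x) = G μ ψ χ k x :=
  setIntegral_kern_mul hμ hχ hu (measurableSet_pShell k)
    (fun h => ne_zero_of_mem_pShell h rfl) (fun α => by simp [pShell, hu]) x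

/-- A shell integral that does not vanish identically forces `χ` to be locally constant: scaling
`x` by a unit close to `1` does not change the integral, but multiplies it by a value of `χ`. -/
lemma exists_level (hμ : μ {x : ℚ_[p] | ‖x‖ ≤ 1} = 1) (hψ : IsStdAddChar ψ) (hχ : IsMulChar χ)
    {k : ℤ} {x : ℚ_[p]} (h : G μ ψ χ k x ≠ 0) : ∃ n, HasLevel χ n := by
  obtain ⟨m, hm⟩ : ∃ m : ℤ, ‖x‖ ≤ (p : ℝ) ^ m := by
    by_cases hx : x = 0
    · exact ⟨0, by simp [hx]⟩
    · exact (exists_norm_eq_zpow hx).imp fun m hm => hm.le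
  refine ⟨max 1 (k + m), hχ, le_max_left _ _, fun v hv => ?_⟩
  have hv1 : ‖v - 1‖ < 1 := by
    refine hv.trans_lt ?_
    rw [← zpow_zero (p : ℝ), zpow_lt_zpow_iff_right₀ one_lt_p]
    omega
  have hvn : ‖v‖ = 1 := by
    have := Padic.norm_eq_of_norm_sub_lt_right (z1 := v) (z2 := 1) (by simpa using hv1)
    simpa using this
  have h1 : v * x = x + (v - 1) * x := by ring
  have h2 := G_mul (ψ := ψ) hμ hχ hvn k x
  rw [h1, G_add_small hψ (mul_le_zpow hv hm (by omega))] at h2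
  exact mul_right_cancel₀ h (by rw [h2, one_mul])

lemma G_ramified (hμ : μ {x : ℚ_[p] | ‖x‖ ≤ 1} = 1) (hχ : IsMulChar χ) {u : ℚ_[p]}
    (hu : ‖u‖ = 1) (hχu : χ u ≠ 1) (k : ℤ) : G μ ψ χ k 0 = 0 := by
  have h := G_mul (ψ := ψ) hμ hχ hu k 0
  rw [mul_zero] at h
  have h2 : (χ u - 1) * G μ ψ χ k 0 = 0 := by rw [sub_mul, h]; ring
  exact (mul_eq_zero.1 h2).resolve_left (sub_ne_zero.2 hχu)

/-- If `‖x‖` is large, `ψ(αx)` oscillates on cosets on which `χ` is constant. -/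
lemma G_vanish (hψ : IsStdAddChar ψ) {n : ℤ} (hχ : HasLevel χ n) {k : ℤ} {x : ℚ_[p]}
    (hx : (p : ℝ) ^ (n - k) < ‖x‖) : G μ ψ χ k x = 0 := by
  have hx0 : x ≠ 0 := by
    rintro rfl; rw [norm_zero] at hx; exact (zpow_pos (p_pos (p := p)) _).not_gt hx
  obtain ⟨m, hm⟩ := exists_norm_eq_zpow hx0
  rw [hm, zpow_lt_zpow_iff_right₀ one_lt_p] at hx
  set β : ℚ_[p] := p ^ (-(1 : ℤ)) / x with hβ
  have hβx : β * x = p ^ (-(1 : ℤ)) := by rw [hβ]; field_simp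
  have hβn : ‖β‖ ≤ (p : ℝ) ^ (k - n) := by
    rw [hβ, norm_div, norm_pz, hm, ← zpow_sub₀ p_pos.ne', zpow_le_iff]; omega
  have hβk : ‖β‖ ≤ (p : ℝ) ^ (k - 1) := hβn.trans (zpow_le_iff.2 (by have := hχ.pos; omega))
  have hne : ψ (β * x) ≠ 1 := psi_ne_one hψ (by rw [hβx, norm_pz, zpow_one])
  have hS : ∀ α, α + β ∈ pShell p k ↔ α ∈ pShell p k := by
    intro α
    have hk : ‖β‖ ≤ (p : ℝ) ^ k := hβk.trans (zpow_le_iff.2 (by omega))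
    simp only [pShell_eq, Set.mem_sdiff, pBall, Set.mem_ofPred_eq, norm_add_le_iff hk,
      norm_add_le_iff hβk]
  have h1 : ∫ α in pShell p k, kern ψ χ x (α + β) ∂μ = ψ (β * x) * G μ ψ χ k x := by
    rw [G, ← integral_const_mul]
    refine setIntegral_congr_fun (measurableSet_pShell k) fun α hα => ?_
    have h2 : ‖α + β‖ = ‖α‖ := ((hS α).2 hα).trans (Eq.symm hα)
    have h3 : χ (α + β) = χ α := by
      refine chi_add_small hχ (ne_zero_of_mem_pShell hα) ?_
      have : ‖α‖ = (p : ℝ) ^ k := hα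
      rw [this, ← zpow_add₀ p_pos.ne']
      exact hβn.trans (zpow_le_iff.2 (by omega))
    simp only [kern, h2, h3, add_mul, hψ.add]
    ring
  rw [setIntegral_add hS] at h1
  have h2 : (ψ (β * x) - 1) * G μ ψ χ k x = 0 := by rw [sub_mul, ← h1, G]; ring
  exact (mul_eq_zero.1 h2).resolve_left (sub_ne_zero.2 hne)

lemma G_sum (hψ : IsStdAddChar ψ) {n : ℤ} (hχ : HasLevel χ n) {k : ℤ} (x : ℚ_[p]) {y : ℚ_[p]}
    (hy : ‖y‖ = (p : ℝ) ^ (1 - k)) : ∑ j ∈ Finset.range p, G μ ψ χ k (x + j * y) = 0 := by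
  simp only [G]
  rw [← integral_finsetSum _ fun j _ => kern_integrableOn hψ hχ _ (isCompact_pShell k)
    fun h => ne_zero_of_mem_pShell h rfl]
  rw [setIntegral_congr_fun (g := fun _ => 0) (measurableSet_pShell k), integral_zero]
  intro α hα
  have hα : ‖α‖ = (p : ℝ) ^ k := hα
  have h1 := psi_sum hψ (z := α * y) (by
    rw [norm_mul, hα, hy, ← zpow_add₀ p_pos.ne', add_sub_cancel, zpow_one])
  have h2 : ∀ j : ℕ, kern ψ χ (x + j * y) α = kern ψ χ x α * ψ (j * (α * y)) := by
    intro j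
    have : α * (x + j * y) = α * x + j * (α * y) := by ring
    simp only [kern, this, hψ.add]
    ring
  simp only [h2]
  rw [← Finset.mul_sum, h1, mul_zero]

/-- `G k` integrates to `0` over sets invariant under translation by `pBall p (1 - k)`. -/
lemma G_average (hψ : IsStdAddChar ψ) {n : ℤ} (hχ : HasLevel χ n) {k r : ℤ} {S : Set ℚ_[p]}
    (hSr : S ⊆ pBall p r)
    (hS : ∀ x y, ‖y‖ ≤ (p : ℝ) ^ (1 - k) → x ∈ S → x + y ∈ S) : ∫ x in S, G μ ψ χ k x ∂μ = 0 := by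
  set y : ℚ_[p] := p ^ (-(1 - k)) with hy
  have hyn : ‖y‖ = (p : ℝ) ^ (1 - k) := norm_pz _
  have hS' : ∀ j : ℕ, ∀ x, x + j * y ∈ S ↔ x ∈ S := by
    intro j x
    have hj : ‖(j : ℚ_[p]) * y‖ ≤ (p : ℝ) ^ (1 - k) :=
      mul_le_zpow (a := 0) (by simpa using natCast_le_one j) hyn.le (by omega)
    refine ⟨fun h => ?_, hS _ _ hj⟩
    have := hS _ (-(j * y)) (by rwa [norm_neg]) h
    simpa using this
  have hFi₀ := (G_integrableOn (μ := μ) (χ := χ) hψ k r).mono_set hSr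
  have h1 : ∑ j ∈ Finset.range p, ∫ x in S, G μ ψ χ k (x + j * y) ∂μ = 0 := by
    rw [← integral_finsetSum]
    · simp [G_sum hψ hχ _ hyn]
    · intro j _
      exact ((((G_continuous hψ k).comp
        (continuous_id.add continuous_const)).continuousOn.integrableOn_compact
        (isCompact_pBall r)).mono_set hSr)
  rw [Finset.sum_congr rfl fun j _ => setIntegral_add (hS' j) _] at h1
  simp only [Finset.sum_const, Finset.card_range, nsmul_eq_mul, mul_eq_zero] at h1
  exact h1.resolve_left (by exact_mod_cast (Fact.out : p.Prime).ne_zero)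

lemma chi_zpow (hχ : IsMulChar χ) (h1 : χ 1 = 1) (k : ℤ) :
    χ ((p : ℚ_[p]) ^ (-k)) = (χ p)⁻¹ ^ k := by
  have hp0 : (p : ℚ_[p]) ≠ 0 := by exact_mod_cast (Fact.out : p.Prime).ne_zero
  have hm : ∀ m : ℕ, χ ((p : ℚ_[p]) ^ m) = χ p ^ m := by
    intro m
    induction m with
    | zero => simpa using h1
    | succ m ih => rw [pow_succ, hχ _ _ (pow_ne_zero _ hp0) hp0, ih, pow_succ]
  have hinv : χ (p : ℚ_[p])⁻¹ = (χ p)⁻¹ := by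
    refine eq_inv_of_mul_eq_one_left ?_
    rw [← hχ _ _ (inv_ne_zero hp0) hp0, inv_mul_cancel₀ hp0, h1]
  have hm' : ∀ m : ℕ, χ ((p : ℚ_[p])⁻¹ ^ m) = (χ p)⁻¹ ^ m := by
    intro m
    induction m with
    | zero => simpa using h1
    | succ m ih =>
      rw [pow_succ, hχ _ _ (pow_ne_zero _ (inv_ne_zero hp0)) (inv_ne_zero hp0), ih, hinv, pow_succ]
  obtain ⟨m, rfl | rfl⟩ := k.eq_nat_or_neg
  · rw [zpow_neg, ← inv_zpow, zpow_natCast, zpow_natCast, hm']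
  · rw [neg_neg, zpow_neg, ← inv_zpow, inv_inv, zpow_natCast, zpow_natCast, hm]

lemma G_unramified (hμ : μ {x : ℚ_[p] | ‖x‖ ≤ 1} = 1) (hψ : IsStdAddChar ψ) (hχ : IsMulChar χ)
    (hun : ∀ u : ℚ_[p], ‖u‖ = 1 → χ u = 1) (k : ℤ) :
    G μ ψ χ k 0 = (1 - 1 / (p : ℂ)) * ((p : ℂ) ^ (3 * k) * (χ p)⁻¹ ^ k) := by
  have hp0 : (p : ℚ_[p]) ≠ 0 := by exact_mod_cast (Fact.out : p.Prime).ne_zero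
  have hpc : (p : ℂ) ≠ 0 := by exact_mod_cast (Fact.out : p.Prime).ne_zero
  have h1 : ∀ α ∈ pShell p k, kern ψ χ 0 α = (p : ℂ) ^ (2 * k) * (χ p)⁻¹ ^ k := by
    intro α hα
    have hn : ‖α‖ = (p : ℝ) ^ k := hα
    have h2 : χ α = (χ p)⁻¹ ^ k := by
      rw [← chi_zpow hχ (hun 1 (by simp)) k]
      have h3 : α = p ^ (-k) * (α / p ^ (-k)) := by field_simp
      have h4 : ‖α / (p : ℚ_[p]) ^ (-k)‖ = 1 := by
        rw [norm_div, norm_pz, hn, div_self (zpow_pos p_pos _).ne']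
      rw [h3, hχ _ _ (zpow_ne_zero _ hp0) (by rw [← norm_ne_zero_iff, h4]; simp), hun _ h4, mul_one]
    rw [kern, h2, mul_zero, hψ.one 0 (by simp), hn]
    push_cast
    rw [mul_comm (2 : ℤ) k, zpow_mul]
    field_simp [zpow_ne_zero k hpc]
  rw [G, setIntegral_congr_fun (measurableSet_pShell k) h1, setIntegral_const, measure_pShell hμ,
    Complex.real_smul]
  have h3 : (p : ℂ) ^ (3 * k) = p ^ k * p ^ (2 * k) := by rw [← zpow_add₀ hpc]; congr 1; ring
  rw [h3]
  push_cast
  ring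

end Shell

/-! ### The innermost outer integral as a function of `t = 1 - 2 x₁ x₃` -/

/-- The domain of integration in `α`, for `u = t - x²`. -/
def annulus (r : ℤ) (u : ℚ_[p]) : Set ℚ_[p] :=
  {α | (p : ℝ) ^ (-r) ≤ ‖α‖ ∧ ‖α‖ ≤ (p : ℝ) ^ r * ‖u‖⁻¹}

/-- The inner integral `I(x₁, x, x₃)` in terms of `t = 1 - 2 x₁ x₃`. -/
def innerInt (μ : Measure ℚ_[p]) (ψ χ : ℚ_[p] → ℂ) (r : ℤ) (t x : ℚ_[p]) : ℂ :=
  open Classical in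
  if t - x ^ 2 = 0 then 0
  else (1 - 1 / (p : ℝ))⁻¹ • ∫ α in annulus r (t - x ^ 2), kern ψ χ x α ∂μ

/-- The integral of `I` over `x₂`, in terms of `t = 1 - 2 x₁ x₃`. -/
def J (μ : Measure ℚ_[p]) (ψ χ : ℚ_[p] → ℂ) (r : ℤ) (t : ℚ_[p]) : ℂ :=
  ∫ x in pBall p r, innerInt μ ψ χ r t x ∂μ

/-- The set of those `x = x₂` for which the shell `‖α‖ = p ^ k` lies in the domain of the
`α`-integral. -/
def slice (r k : ℤ) (t : ℚ_[p]) : Set ℚ_[p] := {x | ‖t - x ^ 2‖ ≤ (p : ℝ) ^ (r - k)}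

lemma measurableSet_slice (r k : ℤ) (t : ℚ_[p]) : MeasurableSet (slice r k t) :=
  (isClosed_le (continuous_const.sub (continuous_id.pow 2)).norm continuous_const).measurableSet

lemma zero_notMem_annulus (r : ℤ) (u : ℚ_[p]) : (0 : ℚ_[p]) ∉ annulus r u := by
  intro h
  have := h.1
  rw [norm_zero] at this
  exact (zpow_pos (p_pos (p := p)) _).not_ge this

lemma isClosed_annulus (r : ℤ) (u : ℚ_[p]) : IsClosed (annulus r u) :=
  (isClosed_le continuous_const continuous_norm).inter
    (isClosed_le continuous_norm continuous_const)

lemma isCompact_annulus (r : ℤ) (u : ℚ_[p]) : IsCompact (annulus r u) := by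
  refine (isCompact_closedBall (0 : ℚ_[p]) ((p : ℝ) ^ r * ‖u‖⁻¹)).of_isClosed_subset
    (isClosed_annulus r u) fun α h => ?_
  simpa using h.2

lemma pShell_subset_annulus_iff {r k : ℤ} {u : ℚ_[p]} (hu : u ≠ 0) :
    (p : ℝ) ^ k ≤ (p : ℝ) ^ r * ‖u‖⁻¹ ↔ ‖u‖ ≤ (p : ℝ) ^ (r - k) := by
  rw [← div_eq_mul_inv, le_div_iff₀ (norm_pos_iff.2 hu), zpow_sub₀ p_pos.ne',
    le_div_iff₀ (zpow_pos p_pos k), mul_comm]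

section J

variable {μ : Measure ℚ_[p]} {ψ χ : ℚ_[p] → ℂ}

open Classical in
lemma integral_annulus {r : ℤ} {u : ℚ_[p]} (hu : u ≠ 0) {f : ℚ_[p] → ℂ}
    (hf : IntegrableOn f (annulus r u) μ) {M : ℤ} (hM : (p : ℝ) ^ r * ‖u‖⁻¹ ≤ (p : ℝ) ^ M) :
    ∫ α in annulus r u, f α ∂μ =
      ∑ k ∈ Finset.Icc (-r) M, if ‖u‖ ≤ (p : ℝ) ^ (r - k) then ∫ α in pShell p k, f α ∂μ else 0 := by
  rw [← Finset.sum_filter]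
  have hA : annulus r u =
      ⋃ k ∈ (Finset.Icc (-r) M).filter (fun k => ‖u‖ ≤ (p : ℝ) ^ (r - k)), pShell p k := by
    ext α
    simp only [annulus, Set.mem_iUnion, Finset.mem_filter, Finset.mem_Icc, pShell,
      Set.mem_ofPred_eq, exists_prop]
    constructor
    · rintro ⟨h1, h2⟩
      have hα : α ≠ 0 := by
        rintro rfl; rw [norm_zero] at h1; exact (zpow_pos (p_pos (p := p)) _).not_ge h1
      obtain ⟨k, hk⟩ := exists_norm_eq_zpow hα
      rw [hk] at h1 h2
      exact ⟨k, ⟨⟨zpow_le_iff.1 h1, zpow_le_iff.1 (h2.trans hM)⟩,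
        (pShell_subset_annulus_iff hu).1 h2⟩, hk⟩
    · rintro ⟨k, ⟨⟨h1, -⟩, h2⟩, hk⟩
      rw [hk]
      exact ⟨zpow_le_iff.2 h1, (pShell_subset_annulus_iff hu).2 h2⟩
  have hd : Set.Pairwise (↑((Finset.Icc (-r) M).filter (fun k => ‖u‖ ≤ (p : ℝ) ^ (r - k))))
      (Function.onFun Disjoint (pShell p)) := by
    intro i _ j _ hij
    rw [Function.onFun, Set.disjoint_left]
    intro x hi hj
    have : (p : ℝ) ^ i = (p : ℝ) ^ j := (Eq.symm hi).trans hj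
    exact hij (zpow_right_injective₀ p_pos one_lt_p.ne' this)
  rw [hA]
  refine integral_biUnion_finset _ (fun k _ => measurableSet_pShell k) hd fun k hk => ?_
  refine hf.mono_set ?_
  rw [hA]
  exact Set.subset_biUnion_of_mem (u := pShell p) hk

/-- If all shell integrals vanish, so does `J`. If the integrand is not integrable on the whole
domain, the Bochner integral vanishes by convention. -/
lemma J_eq_zero_of_G {r : ℤ} (h : ∀ k x, G μ ψ χ k x = 0) (t : ℚ_[p]) : J μ ψ χ r t = 0 := by
  have : ∀ x, innerInt μ ψ χ r t x = 0 := by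
    intro x
    rw [innerInt]
    split_ifs with hu
    · rfl
    by_cases hf : IntegrableOn (kern ψ χ x) (annulus r (t - x ^ 2)) μ
    · obtain ⟨m, hm⟩ := exists_norm_eq_zpow hu
      rw [integral_annulus (M := r - m) hu hf
        (by rw [hm, ← zpow_neg, ← zpow_add₀ p_pos.ne']; rfl)]
      rw [Finset.sum_eq_zero, smul_zero]
      intro k _
      rw [ite_eq_right_iff]
      exact fun _ => h k x
    · rw [integral_undef hf, smul_zero]
  simp [J, this]

variable [μ.IsAddHaarMeasure]

lemma J_mul (hμ : μ {x : ℚ_[p] | ‖x‖ ≤ 1} = 1) (hχ : IsMulChar χ) {u : ℚ_[p]} (hu : ‖u‖ = 1)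
    (r : ℤ) (t : ℚ_[p]) : χ u * J μ ψ χ r (u ^ 2 * t) = J μ ψ χ r t := by
  rw [J, ← setIntegral_mul hμ hu (S := pBall p r) (fun x => by simp [pBall, hu]),
    ← integral_const_mul]
  refine setIntegral_congr_fun (measurableSet_pBall r) fun x _ => ?_
  have hu0 : u ≠ 0 := by rintro rfl; simp at hu
  have h1 : u ^ 2 * t - (u * x) ^ 2 = u ^ 2 * (t - x ^ 2) := by ring
  have h2 : annulus r (u ^ 2 * (t - x ^ 2)) = annulus r (t - x ^ 2) := by simp [annulus, hu]
  have h3 : u ^ 2 * t - (u * x) ^ 2 = 0 ↔ t - x ^ 2 = 0 := by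
    rw [h1, mul_eq_zero, or_iff_right (pow_ne_zero 2 hu0)]
  by_cases h0 : t - x ^ 2 = 0
  · simp only [innerInt, if_pos h0, if_pos (h3.2 h0), mul_zero]
  · simp only [innerInt, if_neg h0, if_neg (mt h3.1 h0), h1, h2]
    rw [mul_smul_comm, setIntegral_kern_mul hμ hχ hu (isClosed_annulus _ _).measurableSet
      (zero_notMem_annulus _ _) (fun α => by simp [annulus, hu])]

lemma ae_sq_ne (t : ℚ_[p]) : ∀ᵐ x ∂μ, t - x ^ 2 ≠ 0 := by
  have hfin : {x : ℚ_[p] | t - x ^ 2 = 0}.Finite := by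
    by_cases h : ∃ w : ℚ_[p], t - w ^ 2 = 0
    · obtain ⟨w, hw⟩ := h
      refine (Set.toFinite {w, -w}).subset fun x hx => ?_
      have hx : t - x ^ 2 = 0 := hx
      have : x ^ 2 = w ^ 2 := by linear_combination hw - hx
      exact sq_eq_sq_iff_eq_or_eq_neg.1 this
    · push Not at h
      refine Set.finite_empty.subset fun x hx => h x hx
  have := hfin.measure_zero μ
  rw [ae_iff]
  simpa using this

/-- Expansion of `J` into finitely many shell contributions. Shells of large radius do not
contribute: on them `G k x` is supported on `‖x‖ ≤ p ^ (n - k)`, where `‖t - x²‖ = ‖t‖` exceeds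
`p ^ (r - k)`. -/
lemma J_eq_sum (hψ : IsStdAddChar ψ) {n : ℤ} (hχ : HasLevel χ n) {r : ℤ} (hr : 1 ≤ r)
    {t : ℚ_[p]} (ht : t ≠ 0) : ∃ K : ℤ, 1 - r ≤ K ∧ J μ ψ χ r t =
      (1 - 1 / (p : ℝ))⁻¹ •
        ∑ k ∈ Finset.Icc (-r) K, ∫ x in pBall p r ∩ slice r k t, G μ ψ χ k x ∂μ := by
  classical
  obtain ⟨m, hm⟩ := exists_norm_eq_zpow ht
  have hn := hχ.pos
  set K : ℤ := r + n + |m| with hK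
  have hKm := le_abs_self m
  have hKm' := neg_abs_le m
  refine ⟨K, by omega, ?_⟩
  have hbig : ∀ k, K < k → ∀ x, ‖t - x ^ 2‖ ≤ (p : ℝ) ^ (r - k) → G μ ψ χ k x = 0 := by
    intro k hk x hx
    refine G_vanish hψ hχ ?_
    by_contra! hle
    have h1 : ‖x ^ 2‖ ≤ (p : ℝ) ^ (m - 1) := by
      rw [pow_two]; exact mul_le_zpow hle hle (by omega)
    have h2 : ‖t - x ^ 2‖ ≤ (p : ℝ) ^ (m - 1) := hx.trans (zpow_le_iff.2 (by omega))
    have h3 := add_le_of h2 h1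
    rw [sub_add_cancel, hm, zpow_le_iff] at h3
    omega
  have hpt : ∀ x, t - x ^ 2 ≠ 0 → innerInt μ ψ χ r t x = (1 - 1 / (p : ℝ))⁻¹ •
      ∑ k ∈ Finset.Icc (-r) K, (slice r k t).indicator (G μ ψ χ k) x := by
    intro x hx
    obtain ⟨v, hv⟩ := exists_norm_eq_zpow hx
    rw [innerInt, if_neg hx, integral_annulus (M := max K (r - v)) hx
      (kern_integrableOn hψ hχ x (isCompact_annulus _ _) (zero_notMem_annulus _ _))]
    · congr 1
      symm
      apply Finset.sum_subset_zero_on_sdiff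
      · exact Finset.Icc_subset_Icc_right (le_max_left _ _)
      · intro k hk
        simp only [Finset.mem_sdiff, Finset.mem_Icc, not_and, not_le] at hk
        rw [ite_eq_right_iff]
        exact hbig k (hk.2 hk.1.1) x
      · intro k _
        rw [Set.indicator_apply]
        rfl
    · rw [hv, ← zpow_neg, ← zpow_add₀ p_pos.ne', zpow_le_iff]
      exact le_max_right _ _
  rw [J, integral_congr_ae (ae_restrict_of_ae ((ae_sq_ne t).mono hpt)), integral_smul,
    integral_finsetSum]
  · congr 1
    refine Finset.sum_congr rfl fun k _ => ?_
    rw [setIntegral_indicator (measurableSet_slice r k t)]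
  · intro k _
    exact (G_integrableOn hψ k r).integrable.indicator (measurableSet_slice r k t)

/-- For `k ≥ 2 - r` and `‖t‖ < p ^ (2 r)` the slice is invariant under translation by
`pBall p (1 - k)`. -/
lemma slice_invariant {r k : ℤ} (hk : 2 - r ≤ k) {t : ℚ_[p]} (ht : ‖t‖ ≤ (p : ℝ) ^ (2 * r - 1))
    {x y : ℚ_[p]} (hy : ‖y‖ ≤ (p : ℝ) ^ (1 - k)) (hx : x ∈ pBall p r ∩ slice r k t) :
    x + y ∈ pBall p r ∩ slice r k t := by
  obtain ⟨hx1, hx2⟩ := hx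
  have hx2 : ‖t - x ^ 2‖ ≤ (p : ℝ) ^ (r - k) := hx2
  have h1 : ‖x ^ 2‖ ≤ (p : ℝ) ^ (2 * r - 1) := by
    have := sub_le_of ht (hx2.trans (zpow_le_iff.2 (by omega : r - k ≤ 2 * r - 1)))
    rwa [sub_sub_cancel] at this
  have h2 : ‖x‖ ≤ (p : ℝ) ^ (r - 1) := le_of_sq_le h1 (by omega)
  refine ⟨add_le_of hx1 (hy.trans (zpow_le_iff.2 (by omega))), ?_⟩
  have h3 : t - (x + y) ^ 2 = t - x ^ 2 - (x * y + x * y + y * y) := by ring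
  have h4 : ‖x * y‖ ≤ (p : ℝ) ^ (r - k) := mul_le_zpow h2 hy (by omega)
  have h5 : ‖y * y‖ ≤ (p : ℝ) ^ (r - k) := mul_le_zpow hy hy (by omega)
  change ‖t - (x + y) ^ 2‖ ≤ (p : ℝ) ^ (r - k)
  rw [h3]
  exact sub_le_of hx2 (add_le_of (add_le_of h4 h4) h5)

/-- Only the shells `‖α‖ = p ^ (-r)` and `‖α‖ = p ^ (1 - r)` contribute to `J`, if either
`‖t‖ < p ^ (2 r)` or `χ` is unramified. -/
lemma J_eq_two (hψ : IsStdAddChar ψ) {n : ℤ} (hχ : HasLevel χ n) {r : ℤ} (hr : 1 ≤ r)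
    {t : ℚ_[p]} (ht : t ≠ 0) (h : ‖t‖ ≤ (p : ℝ) ^ (2 * r - 1) ∨ n = 1) :
    J μ ψ χ r t = (1 - 1 / (p : ℝ))⁻¹ •
      (∫ x in pBall p r ∩ slice r (-r) t, G μ ψ χ (-r) x ∂μ +
        ∫ x in pBall p r ∩ slice r (1 - r) t, G μ ψ χ (1 - r) x ∂μ) := by
  obtain ⟨K, hK, hJ⟩ := J_eq_sum (μ := μ) hψ hχ hr ht
  rw [hJ]
  congr 1
  rw [← Finset.sum_pair (f := fun k => ∫ x in pBall p r ∩ slice r k t, G μ ψ χ k x ∂μ)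
    (by omega : -r ≠ 1 - r)]
  symm
  apply Finset.sum_subset
  · intro k hk
    simp only [Finset.mem_insert, Finset.mem_singleton] at hk
    rw [Finset.mem_Icc]
    omega
  intro k hk hk2
  simp only [Finset.mem_insert, Finset.mem_singleton, not_or] at hk2
  rw [Finset.mem_Icc] at hk
  have hk3 : 2 - r ≤ k := by omega
  by_cases ht' : ‖t‖ ≤ (p : ℝ) ^ (2 * r - 1)
  · exact G_average hψ hχ Set.inter_subset_left fun x y hy hx => slice_invariant hk3 ht' hy hx
  · obtain rfl : n = 1 := h.resolve_left ht'
    rw [setIntegral_congr_fun (g := fun _ => 0)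
      ((measurableSet_pBall r).inter (measurableSet_slice r k t)), integral_zero]
    rintro x ⟨-, hx⟩
    have hx : ‖t - x ^ 2‖ ≤ (p : ℝ) ^ (r - k) := hx
    refine G_vanish hψ hχ ?_
    by_contra! hle
    apply ht'
    have h1 : ‖x ^ 2‖ ≤ (p : ℝ) ^ (2 * r - 1) := by
      rw [pow_two]; exact mul_le_zpow hle hle (by omega)
    have h2 := add_le_of (hx.trans (zpow_le_iff.2 (by omega : r - k ≤ 2 * r - 1))) h1
    rwa [sub_add_cancel] at h2

lemma sq_le_of_mem {r : ℤ} {x : ℚ_[p]} (hx : x ∈ pBall p r) : ‖x ^ 2‖ ≤ (p : ℝ) ^ (2 * r) := by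
  have hx : ‖x‖ ≤ (p : ℝ) ^ r := hx
  rw [pow_two]; exact mul_le_zpow hx hx (by omega)

lemma integral_G_const (hμ : μ {x : ℚ_[p] | ‖x‖ ≤ 1} = 1) (hψ : IsStdAddChar ψ) (k : ℤ) :
    ∫ x in pBall p (-k), G μ ψ χ k x ∂μ = (p : ℝ) ^ (-k) • G μ ψ χ k 0 := by
  rw [← measure_pBall hμ, ← setIntegral_const]
  refine setIntegral_congr_fun (measurableSet_pBall _) fun x hx => ?_
  have := G_add_small (μ := μ) (χ := χ) hψ (x := 0) (y := x) (k := k) hx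
  rwa [zero_add] at this

lemma slice_first {r : ℤ} {t : ℚ_[p]} (ht : ‖t‖ ≤ (p : ℝ) ^ (2 * r)) :
    pBall p r ∩ slice r (-r) t = pBall p (- -r) := by
  rw [neg_neg]
  refine Set.inter_eq_left.2 fun x hx => ?_
  change ‖t - x ^ 2‖ ≤ (p : ℝ) ^ (r - -r)
  rw [sub_neg_eq_add, ← two_mul]
  exact sub_le_of ht (sq_le_of_mem hx)

/-- The value of `J` for `t` in the open ball of radius `p ^ (2 r)`. -/
lemma J_small (hμ : μ {x : ℚ_[p] | ‖x‖ ≤ 1} = 1) (hψ : IsStdAddChar ψ) {n : ℤ}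
    (hχ : HasLevel χ n) {r : ℤ} (hr : 1 ≤ r) {t : ℚ_[p]} (ht : t ≠ 0)
    (h : ‖t‖ ≤ (p : ℝ) ^ (2 * r - 1)) :
    J μ ψ χ r t = (1 - 1 / (p : ℝ))⁻¹ •
      ((p : ℝ) ^ r • G μ ψ χ (-r) 0 + (p : ℝ) ^ (r - 1) • G μ ψ χ (1 - r) 0) := by
  have h2 : pBall p r ∩ slice r (1 - r) t = pBall p (-(1 - r)) := by
    ext x
    simp only [slice, pBall, Set.mem_inter_iff, Set.mem_ofPred_eq]
    have e1 : r - (1 - r) = 2 * r - 1 := by ring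
    have e2 : -(1 - r) = r - 1 := by ring
    rw [e1, e2]
    constructor
    · rintro ⟨-, hx⟩
      have := sub_le_of h hx
      rw [sub_sub_cancel] at this
      exact le_of_sq_le this (by omega)
    · intro hx
      refine ⟨hx.trans (zpow_le_iff.2 (by omega)), sub_le_of h ?_⟩
      rw [pow_two]; exact mul_le_zpow hx hx (by omega)
  rw [J_eq_two hψ hχ hr ht (Or.inl h), slice_first (h.trans (zpow_le_iff.2 (by omega))), h2,
    integral_G_const hμ hψ, integral_G_const hμ hψ, neg_neg, neg_sub]

end J

/-! ### The integrals over `x₃` and `x₁` -/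

section Outer

variable {μ : Measure ℚ_[p]} [μ.IsAddHaarMeasure] {ψ χ : ℚ_[p] → ℂ}

lemma norm_two_eq_one (hp : p ≠ 2) : ‖(2 : ℚ_[p])‖ = 1 := by
  have h : ‖((2 : ℕ) : ℚ_[p])‖ = 1 := by
    rw [Padic.norm_natCast_eq_one_iff]
    exact (Nat.coprime_primes Fact.out Nat.prime_two).2 hp
  exact_mod_cast h

lemma ae_t_ne (x₁ : ℚ_[p]) : ∀ᵐ x₃ ∂μ, 1 - 2 * x₁ * x₃ ≠ 0 := by
  have hfin : {x₃ : ℚ_[p] | 1 - 2 * x₁ * x₃ = 0}.Subsingleton := by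
    intro a ha b hb
    have ha : 1 - 2 * x₁ * a = 0 := ha
    have hb : 1 - 2 * x₁ * b = 0 := hb
    have h1 : (2 * x₁) ≠ 0 := by rintro h; rw [h] at ha; simp at ha
    exact mul_left_cancel₀ h1 (by linear_combination hb - ha)
  have := hfin.finite.measure_zero μ
  rw [ae_iff]
  simpa using this

lemma norm_t_le {a b c : ℤ} (hc : 0 ≤ c) (habc : a + b ≤ c) {x₁ x₃ : ℚ_[p]}
    (h1 : ‖x₁‖ ≤ (p : ℝ) ^ a) (h3 : ‖x₃‖ ≤ (p : ℝ) ^ b) :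
    ‖1 - 2 * x₁ * x₃‖ ≤ (p : ℝ) ^ c := by
  refine sub_le_of ?_ ?_
  · rw [norm_one]; exact one_le_zpow₀ one_lt_p.le hc
  · have h2 : ‖(2 : ℚ_[p])‖ ≤ 1 := by exact_mod_cast natCast_le_one (p := p) 2
    have : ‖2 * x₁‖ ≤ (p : ℝ) ^ a := mul_le_zpow (a := 0) (by simpa using h2) h1 (by omega)
    exact mul_le_zpow this h3 habc

/-- The integral over `x₃` when `‖x₁‖ < p ^ r`: the integrand is almost everywhere constant. -/
lemma integral_J_small (hμ : μ {x : ℚ_[p] | ‖x‖ ≤ 1} = 1) (hψ : IsStdAddChar ψ) {n : ℤ}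
    (hχ : HasLevel χ n) {r : ℤ} (hr : 1 ≤ r) {x₁ : ℚ_[p]} (hx₁ : ‖x₁‖ ≤ (p : ℝ) ^ (r - 1)) :
    ∫ x₃ in pBall p r, J μ ψ χ r (1 - 2 * x₁ * x₃) ∂μ = (p : ℝ) ^ r • ((1 - 1 / (p : ℝ))⁻¹ •
      ((p : ℝ) ^ r • G μ ψ χ (-r) 0 + (p : ℝ) ^ (r - 1) • G μ ψ χ (1 - r) 0)) := by
  rw [← measure_pBall hμ, ← setIntegral_const, measure_pBall hμ]
  refine setIntegral_congr_ae (measurableSet_pBall r) ?_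
  filter_upwards [ae_t_ne x₁] with x₃ ht hx₃
  exact J_small hμ hψ hχ hr ht (norm_t_le (by omega) (by omega) hx₁ hx₃)

/-- For `‖x₁‖ = p ^ r` and `χ(u) ≠ 1`, the affine map `x₃ ↦ u² x₃ + b` which multiplies
`1 - 2 x₁ x₃` by `u²` preserves `pBall p r`, and multiplies the integrand by `χ(u)⁻¹`. -/
lemma integral_J_ramified (hp : p ≠ 2) (hμ : μ {x : ℚ_[p] | ‖x‖ ≤ 1} = 1) (hχ : IsMulChar χ)
    {u : ℚ_[p]} (hu : ‖u‖ = 1) (hχu : χ u ≠ 1) {r : ℤ} (hr : 1 ≤ r) {x₁ : ℚ_[p]}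
    (hx₁ : ‖x₁‖ = (p : ℝ) ^ r) :
    ∫ x₃ in pBall p r, J μ ψ χ r (1 - 2 * x₁ * x₃) ∂μ = 0 := by
  have h10 : x₁ ≠ 0 := ne_zero_of_mem_pShell (k := r) hx₁
  have h20 : (2 : ℚ_[p]) ≠ 0 := two_ne_zero
  set b : ℚ_[p] := (1 - u ^ 2) / (2 * x₁) with hb
  have hbr : ‖b‖ ≤ (p : ℝ) ^ r := by
    have h1 : ‖1 - u ^ 2‖ ≤ 1 := sub_le_of (by simp) (by simp [hu])
    rw [hb, norm_div, norm_mul, norm_two_eq_one hp, one_mul, hx₁]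
    rw [div_le_iff₀ (zpow_pos p_pos r), ← zpow_add₀ p_pos.ne']
    exact h1.trans (one_le_zpow₀ one_lt_p.le (by omega))
  have h1 := setIntegral_add (μ := μ) (S := pBall p r) (y := b)
    (fun x => norm_add_le_iff hbr) fun x₃ => J μ ψ χ r (1 - 2 * x₁ * x₃)
  rw [← setIntegral_mul hμ (u := u ^ 2) (by simp [hu]) (fun x => by simp [pBall, hu])] at h1
  have h2 : ∀ x₃, J μ ψ χ r (1 - 2 * x₁ * x₃) =
      χ u * J μ ψ χ r (1 - 2 * x₁ * (u ^ 2 * x₃ + b)) := by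
    intro x₃
    rw [← J_mul hμ hχ hu]
    congr 2
    rw [hb]
    field_simp
    ring
  have h3 : ∫ x₃ in pBall p r, J μ ψ χ r (1 - 2 * x₁ * x₃) ∂μ =
      χ u * ∫ x₃ in pBall p r, J μ ψ χ r (1 - 2 * x₁ * x₃) ∂μ := by
    conv_rhs => rw [← h1, ← integral_const_mul]
    exact integral_congr_ae (Filter.Eventually.of_forall h2)
  have h4 : (χ u - 1) * ∫ x₃ in pBall p r, J μ ψ χ r (1 - 2 * x₁ * x₃) ∂μ = 0 := by
    rw [sub_mul, ← h3, one_mul, sub_self]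
  exact (mul_eq_zero.1 h4).resolve_left (sub_ne_zero.2 hχu)

/-- For `‖x₁‖ = p ^ r` the shell `‖α‖ = p ^ (1 - r)` contributes nothing: after exchanging the
integrals over `x₂` and `x₃`, the measure of the admissible `x₃` does not depend on `x₂`, and
`G (1 - r)` has mean zero over `pBall p r`. The integrability claim comes from Fubini too. -/
lemma integral_second_shell (hp : p ≠ 2) (hμ : μ {x : ℚ_[p] | ‖x‖ ≤ 1} = 1)
    (hψ : IsStdAddChar ψ) {n : ℤ} (hχ : HasLevel χ n) {r : ℤ} (hr : 1 ≤ r) {x₁ : ℚ_[p]}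
    (hx₁ : ‖x₁‖ = (p : ℝ) ^ r) :
    IntegrableOn (fun x₃ => ∫ x in pBall p r ∩ slice r (1 - r) (1 - 2 * x₁ * x₃),
      G μ ψ χ (1 - r) x ∂μ) (pBall p r) μ ∧
    ∫ x₃ in pBall p r, (∫ x in pBall p r ∩ slice r (1 - r) (1 - 2 * x₁ * x₃),
      G μ ψ χ (1 - r) x ∂μ) ∂μ = 0 := by
  have h10 : x₁ ≠ 0 := ne_zero_of_mem_pShell (k := r) hx₁
  have h20 : (2 : ℚ_[p]) ≠ 0 := two_ne_zero
  set T : Set (ℚ_[p] × ℚ_[p]) :=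
    {z | ‖1 - 2 * x₁ * z.1 - z.2 ^ 2‖ ≤ (p : ℝ) ^ (r - (1 - r))} with hT
  have hTm : MeasurableSet T := (isClosed_le (by fun_prop) continuous_const).measurableSet
  set F : ℚ_[p] → ℚ_[p] → ℂ := fun x₃ x =>
    T.indicator (fun z => G μ ψ χ (1 - r) z.2) (x₃, x) with hF
  have hFint : Integrable (Function.uncurry F)
      ((μ.restrict (pBall p r)).prod (μ.restrict (pBall p r))) := by
    have hfin : IsFiniteMeasure (μ.restrict (pBall p r)) := ⟨by simpa using pBall_lt_top μ r⟩
    have : Integrable (fun z : ℚ_[p] × ℚ_[p] => G μ ψ χ (1 - r) z.2)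
        ((μ.restrict (pBall p r)).prod (μ.restrict (pBall p r))) :=
      (G_integrableOn (μ := μ) (χ := χ) hψ (1 - r) r).integrable.comp_snd _
    exact this.indicator hTm
  have hFx : ∀ x₃, ∫ x in pBall p r, F x₃ x ∂μ =
      ∫ x in pBall p r ∩ slice r (1 - r) (1 - 2 * x₁ * x₃), G μ ψ χ (1 - r) x ∂μ := by
    intro x₃
    rw [← setIntegral_indicator (measurableSet_slice _ _ _)]
    rfl
  refine ⟨?_, ?_⟩
  · have := hFint.integral_prod_left
    simp only [Function.uncurry_apply_pair, hFx] at this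
    exact this
  · simp only [← hFx]
    rw [integral_integral_swap hFint]
    have hsw : ∀ x ∈ pBall p r, ∫ x₃ in pBall p r, F x₃ x ∂μ =
        ((p : ℝ) ^ (r - 1) : ℝ) • G μ ψ χ (1 - r) x := by
      intro x hx
      set w : ℚ_[p] := (1 - x ^ 2) / (2 * x₁) with hw
      have hwr : ‖w‖ ≤ (p : ℝ) ^ r := by
        rw [hw, norm_div, norm_mul, norm_two_eq_one hp, one_mul, hx₁,
          div_le_iff₀ (zpow_pos p_pos r), ← zpow_add₀ p_pos.ne', ← two_mul]
        refine sub_le_of ?_ (sq_le_of_mem hx)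
        rw [norm_one]; exact one_le_zpow₀ one_lt_p.le (by omega)
      have hset : ∀ x₃, (x₃, x) ∈ T ↔ x₃ + -w ∈ pBall p (r - 1) := by
        intro x₃
        have e : 1 - 2 * x₁ * x₃ - x ^ 2 = -(2 * x₁) * (x₃ + -w) := by
          rw [hw]; field_simp; ring
        have e2 : r - (1 - r) = r + (r - 1) := by ring
        change ‖1 - 2 * x₁ * x₃ - x ^ 2‖ ≤ (p : ℝ) ^ (r - (1 - r)) ↔ ‖x₃ + -w‖ ≤ _
        rw [e, norm_mul, norm_neg, norm_mul, norm_two_eq_one hp, one_mul, hx₁, e2,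
          zpow_add₀ p_pos.ne', mul_le_mul_iff_right₀ (zpow_pos p_pos r)]
      have hsub : (fun x₃ => x₃ + -w) ⁻¹' pBall p (r - 1) ⊆ pBall p r := by
        intro x₃ h
        have h : ‖x₃ + -w‖ ≤ (p : ℝ) ^ (r - 1) := h
        exact (norm_add_le_iff (by rwa [norm_neg])).1 (h.trans (zpow_le_iff.2 (by omega)))
      have hm : MeasurableSet ((fun x₃ => x₃ + -w) ⁻¹' pBall p (r - 1)) :=
        (continuous_id.add continuous_const).measurable (measurableSet_pBall _)
      have hFi : ∀ x₃, F x₃ x = ((fun x₃ => x₃ + -w) ⁻¹' pBall p (r - 1)).indicator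
          (fun _ => G μ ψ χ (1 - r) x) x₃ := by
        intro x₃
        classical
        simp only [hF, Set.indicator_apply, hset, Set.mem_preimage]
      simp only [hFi]
      rw [setIntegral_indicator hm, Set.inter_eq_right.2 hsub, setIntegral_const, measureReal_def,
        measure_preimage_add_right, ← measureReal_def, measure_pBall hμ]
    rw [setIntegral_congr_fun (measurableSet_pBall r) hsw, integral_smul,
      G_average hψ hχ subset_rfl, smul_zero]
    intro x y hy hx
    exact add_le_of hx (by rwa [sub_sub_cancel] at hy)

lemma integrable_const_pBall (r : ℤ) (c : ℂ) :
    Integrable (fun _ : ℚ_[p] => c) (μ.restrict (pBall p r)) := by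
  have hfin : IsFiniteMeasure (μ.restrict (pBall p r)) := ⟨by simpa using pBall_lt_top μ r⟩
  exact integrable_const c

lemma integral_J_unramified (hp : p ≠ 2) (hμ : μ {x : ℚ_[p] | ‖x‖ ≤ 1} = 1)
    (hψ : IsStdAddChar ψ) (hχ : HasLevel χ 1) {r : ℤ} (hr : 1 ≤ r) {x₁ : ℚ_[p]}
    (hx₁ : ‖x₁‖ = (p : ℝ) ^ r) :
    ∫ x₃ in pBall p r, J μ ψ χ r (1 - 2 * x₁ * x₃) ∂μ =
      (p : ℝ) ^ r • ((1 - 1 / (p : ℝ))⁻¹ • ((p : ℝ) ^ r • G μ ψ χ (-r) 0)) := by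
  obtain ⟨hFi₀, hzero⟩ := integral_second_shell (ψ := ψ) hp hμ hψ hχ hr hx₁
  have h : ∀ᵐ x₃ ∂μ, x₃ ∈ pBall p r → J μ ψ χ r (1 - 2 * x₁ * x₃) = (1 - 1 / (p : ℝ))⁻¹ •
      ((p : ℝ) ^ r • G μ ψ χ (-r) 0 + ∫ x in pBall p r ∩ slice r (1 - r) (1 - 2 * x₁ * x₃),
        G μ ψ χ (1 - r) x ∂μ) := by
    filter_upwards [ae_t_ne x₁] with x₃ ht hx₃
    rw [J_eq_two hψ hχ hr ht (Or.inr rfl),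
      slice_first (norm_t_le (by omega) (by omega) hx₁.le hx₃), integral_G_const hμ hψ, neg_neg]
  rw [setIntegral_congr_ae (measurableSet_pBall r) h, integral_smul,
    integral_add (integrable_const_pBall r _) hFi₀, hzero, add_zero,
    setIntegral_const, measure_pBall hμ, smul_comm]

/-- The iterated integral in the unramified case. -/
lemma total_unramified (hp : p ≠ 2) (hμ : μ {x : ℚ_[p] | ‖x‖ ≤ 1} = 1)
    (hψ : IsStdAddChar ψ) (hχ : IsMulChar χ) (hun : ∀ u : ℚ_[p], ‖u‖ = 1 → χ u = 1) {r : ℤ}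
    (hr : 1 ≤ r) :
    ∫ x₁ in pBall p r, (∫ x₃ in pBall p r, J μ ψ χ r (1 - 2 * x₁ * x₃) ∂μ) ∂μ =
      (p : ℂ) * (χ p)⁻¹ ^ (1 - r) + (χ p)⁻¹ ^ (-r) := by
  have hL : HasLevel χ 1 := by
    refine ⟨hχ, le_rfl, fun v hv => hun v ?_⟩
    have hv1 : ‖v - 1‖ < 1 := by
      refine hv.trans_lt ?_
      rw [← zpow_zero (p : ℝ), zpow_lt_zpow_iff_right₀ one_lt_p]
      omega
    have := Padic.norm_eq_of_norm_sub_lt_right (z1 := v) (z2 := 1) (by simpa using hv1)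
    simpa using this
  set a := (p : ℝ) ^ r • ((1 - 1 / (p : ℝ))⁻¹ • ((p : ℝ) ^ r • G μ ψ χ (-r) 0)) with ha
  set b := (p : ℝ) ^ r • ((1 - 1 / (p : ℝ))⁻¹ • ((p : ℝ) ^ (r - 1) • G μ ψ χ (1 - r) 0)) with hb
  have hW : ∀ x₁ ∈ pBall p r, ∫ x₃ in pBall p r, J μ ψ χ r (1 - 2 * x₁ * x₃) ∂μ =
      a + (pBall p (r - 1)).indicator (fun _ => b) x₁ := by
    intro x₁ hx₁
    by_cases h : x₁ ∈ pBall p (r - 1)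
    · rw [Set.indicator_of_mem h, integral_J_small hμ hψ hL hr h, smul_add, smul_add]
    · rw [Set.indicator_of_notMem h, add_zero]
      refine integral_J_unramified hp hμ hψ hL hr ?_
      have : x₁ ∈ pShell p r := by rw [pShell_eq]; exact ⟨hx₁, h⟩
      exact this
  have hsub : pBall p (r - 1) ⊆ pBall p r := fun x hx => le_trans hx (zpow_le_iff.2 (by omega))
  rw [setIntegral_congr_fun (measurableSet_pBall r) hW, integral_add
    (integrable_const_pBall r _)
    ((integrable_const_pBall r b).indicator (measurableSet_pBall _)),
    setIntegral_indicator (measurableSet_pBall _), Set.inter_eq_right.2 hsub, setIntegral_const,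
    setIntegral_const, measure_pBall hμ, measure_pBall hμ, ha, hb, G_unramified hμ hψ hχ hun,
    G_unramified hμ hψ hχ hun]
  have hpc : (p : ℂ) ≠ 0 := by exact_mod_cast (Fact.out : p.Prime).ne_zero
  have hc : (1 - 1 / (p : ℂ)) ≠ 0 := by
    have : (1 - 1 / (p : ℝ)) ≠ 0 := by
      have := (div_lt_one (p_pos (p := p))).2 one_lt_p
      linarith
    have h := Complex.ofReal_ne_zero.2 this
    push_cast at h
    exact h
  simp only [Complex.real_smul]
  push_cast
  have e1 : (p : ℂ) ^ r * (p ^ r * ((1 - 1 / (p : ℂ))⁻¹ * (p ^ r * ((1 - 1 / (p : ℂ)) *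
      (p ^ (3 * -r) * (χ p)⁻¹ ^ (-r)))))) = (χ p)⁻¹ ^ (-r) := by
    have : (p : ℂ) ^ r * p ^ r * p ^ r * p ^ (3 * -r) = 1 := by
      rw [← zpow_add₀ hpc, ← zpow_add₀ hpc, ← zpow_add₀ hpc, ← zpow_zero (p : ℂ)]; congr 1; ring
    calc _ = ((p : ℂ) ^ r * p ^ r * p ^ r * p ^ (3 * -r)) *
          ((1 - 1 / (p : ℂ))⁻¹ * (1 - 1 / (p : ℂ))) * (χ p)⁻¹ ^ (-r) := by ring
      _ = _ := by rw [this, inv_mul_cancel₀ hc, one_mul, one_mul]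
  have e2 : (p : ℂ) ^ (r - 1) * (p ^ r * ((1 - 1 / (p : ℂ))⁻¹ * (p ^ (r - 1) * ((1 - 1 / (p : ℂ)) *
      (p ^ (3 * (1 - r)) * (χ p)⁻¹ ^ (1 - r)))))) = p * (χ p)⁻¹ ^ (1 - r) := by
    have : (p : ℂ) ^ (r - 1) * p ^ r * p ^ (r - 1) * p ^ (3 * (1 - r)) = p := by
      rw [← zpow_add₀ hpc, ← zpow_add₀ hpc, ← zpow_add₀ hpc]
      conv_rhs => rw [← zpow_one (p : ℂ)]
      congr 1; ring
    calc _ = ((p : ℂ) ^ (r - 1) * p ^ r * p ^ (r - 1) * p ^ (3 * (1 - r))) *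
          ((1 - 1 / (p : ℂ))⁻¹ * (1 - 1 / (p : ℂ))) * (χ p)⁻¹ ^ (1 - r) := by ring
      _ = _ := by rw [this, inv_mul_cancel₀ hc, mul_one]
  rw [e1, e2, add_comm]

/-- The iterated integral in the ramified case. -/
lemma total_ramified (hp : p ≠ 2) (hμ : μ {x : ℚ_[p] | ‖x‖ ≤ 1} = 1)
    (hψ : IsStdAddChar ψ) (hχ : IsMulChar χ) {u : ℚ_[p]} (hu : ‖u‖ = 1) (hχu : χ u ≠ 1) {r : ℤ}
    (hr : 1 ≤ r) :
    ∫ x₁ in pBall p r, (∫ x₃ in pBall p r, J μ ψ χ r (1 - 2 * x₁ * x₃) ∂μ) ∂μ = 0 := by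
  by_cases hG : ∀ k x, G μ ψ χ k x = 0
  · simp [J_eq_zero_of_G hG]
  push Not at hG
  obtain ⟨k, x, hkx⟩ := hG
  obtain ⟨n, hL⟩ := exists_level hμ hψ hχ hkx
  rw [setIntegral_congr_fun (g := fun _ => 0) (measurableSet_pBall r), integral_zero]
  intro x₁ hx₁
  by_cases h : x₁ ∈ pBall p (r - 1)
  · simp only [integral_J_small hμ hψ hL hr h, G_ramified hμ hχ hu hχu, smul_zero, add_zero]
  · refine integral_J_ramified hp hμ hχ hu hχu hr ?_
    have : x₁ ∈ pShell p r := by rw [pShell_eq]; exact ⟨hx₁, h⟩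
    exact this

end Outer

end Helpers

end PadicMellin

/-- Proposition 3.5: the Mellin transform of the split-case Fourier
orbital integral `Ψ(α,Φ_r)` equals `p·X^{1−r} + X^{−r}` for unramified `χ` and `0`
for ramified `χ`. -/
theorem stmt_17 (hp : p ≠ 2) (μ : Measure ℚ_[p]) [μ.IsAddHaarMeasure]
    (hμ : μ {x : ℚ_[p] | ‖x‖ ≤ 1} = 1)
    (ψ : ℚ_[p] → ℂ)
    (hψadd : ∀ x y : ℚ_[p], ψ (x + y) = ψ x * ψ y)
    (hψ1 : ∀ x : ℚ_[p], ‖x‖ ≤ 1 → ψ x = 1)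
    (hψnt : ∃ x : ℚ_[p], ‖x‖ = (p : ℝ) ∧ ψ x ≠ 1)
    (χ : ℚ_[p] → ℂ)
    (hχmul : ∀ a b : ℚ_[p], a ≠ 0 → b ≠ 0 → χ (a * b) = χ a * χ b)
    (r : ℕ) (hr : 1 ≤ r)
    -- the inner integral over α
    (I : ℚ_[p] → ℚ_[p] → ℚ_[p] → ℂ)
    (hI0 : ∀ x₁ x₂ x₃ : ℚ_[p], 1 - x₂ ^ 2 - 2 * x₁ * x₃ = 0 → I x₁ x₂ x₃ = 0)
    (hI1 : ∀ x₁ x₂ x₃ : ℚ_[p], 1 - x₂ ^ 2 - 2 * x₁ * x₃ ≠ 0 →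
      I x₁ x₂ x₃ = (1 - 1/(p : ℝ))⁻¹ •
        ∫ α in {α : ℚ_[p] | (p : ℝ) ^ (-(r : ℤ)) ≤ ‖α‖ ∧
            ‖α‖ ≤ (p : ℝ) ^ (r : ℤ) * ‖1 - x₂ ^ 2 - 2 * x₁ * x₃‖⁻¹},
          (‖α‖ : ℂ)⁻¹ * ((‖α‖ : ℂ) ^ 3 * ψ (α * x₂) * χ α) ∂μ)
    -- the iterated outer integral
    (V : ℂ)
    (hV : V = ∫ x₁ in {y : ℚ_[p] | ‖y‖ ≤ (p : ℝ) ^ (r : ℤ)},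
        (∫ x₃ in {y : ℚ_[p] | ‖y‖ ≤ (p : ℝ) ^ (r : ℤ)},
          (∫ x₂ in {y : ℚ_[p] | ‖y‖ ≤ (p : ℝ) ^ (r : ℤ)}, I x₁ x₂ x₃ ∂μ) ∂μ) ∂μ) :
    -- unramified case
    ((∀ u : ℚ_[p], ‖u‖ = 1 → χ u = 1) → ∀ X : ℂ, X = (χ (p : ℚ_[p]))⁻¹ →
      V = (p : ℂ) * X ^ (1 - (r : ℤ)) + X ^ (-(r : ℤ)))
    -- ramified case
    ∧ ((∃ u : ℚ_[p], ‖u‖ = 1 ∧ χ u ≠ 1) → V = 0) := by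
  have hψ : PadicMellin.IsStdAddChar ψ := ⟨hψadd, hψ1, hψnt⟩
  have hr' : (1 : ℤ) ≤ r := by exact_mod_cast hr
  have hI : ∀ x₁ x₂ x₃, I x₁ x₂ x₃ = PadicMellin.innerInt μ ψ χ r (1 - 2 * x₁ * x₃) x₂ := by
    intro x₁ x₂ x₃
    have e : 1 - 2 * x₁ * x₃ - x₂ ^ 2 = 1 - x₂ ^ 2 - 2 * x₁ * x₃ := by ring
    rw [PadicMellin.innerInt, e]
    split_ifs with h
    · exact hI0 _ _ _ h
    · exact hI1 _ _ _ h
  have hV' : V = ∫ x₁ in PadicMellin.pBall p r, (∫ x₃ in PadicMellin.pBall p r,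
      PadicMellin.J μ ψ χ r (1 - 2 * x₁ * x₃) ∂μ) ∂μ := by
    rw [hV]
    simp only [hI]
    rfl
  refine ⟨fun hun X hX => ?_, ?_⟩
  · rw [hV', hX]
    exact PadicMellin.total_unramified hp hμ hψ hχmul hun hr'
  · rintro ⟨u, hu, hχu⟩
    rw [hV']
    exact PadicMellin.total_ramified hp hμ hψ hχmul hu hχu hr'

end
end

section
/- Let p be an odd prime, ψ an additive character of ℚ_p of conductor ℤ_p, and r ≥ 1 an integer (split case). For α ∈ ℚ_pˣ define Ψ_r(α) = ∫_{ℚ_p³} 1[ ‖α/2 + z/α‖ ≤ p^r, ‖x₁/α‖ ≤ p^r, ‖x₂/α‖ ≤ p^r, ‖x₃/α‖ ≤ p^r, ‖α⁻¹‖ ≤ p^r ]·ψ(x₂) dx₁dx₂dx₃, where z = −x₁x₃ − x₂²/2 and 1[·] is the indicator of the listed conditions. Let w = [[0,1],[−1,0]], n(y) = [[1,y],[0,1]], and for t ∈ {r−1, r} and β ∈ ℚ_pˣ define Ψ'_t(β) = Σ_{s∈ℤ} ∫_{‖a‖=p^s} φ'_t(w·n(β)·diag(a,1))·(−1)^s d^×a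 (for each β only finitely many summands are nonzero). Then for every α ∈ ℚ_pˣ: Ψ_r(α) = ψ(α)·‖α‖·(−1)^r·p^r·( Ψ'_r(α⁻¹) + Ψ'_{r−1}(α⁻¹) ). -/
open MeasureTheory Matrix

noncomputable section

variable (p : ℕ) [Fact p.Prime]

/-!
The two sides are computed in closed form. Write `‖α‖ = p^m`.

On the `SO(3,2)` side, put `N = r + m`. The indicator is nonzero only if `N ≥ 0`, and then it says
that all `‖xᵢ‖ ≤ p^N` and `‖α² - x₂² - 2 x₁x₃‖ ≤ p^N` (here `‖2‖ = 1`). Integrating over `x₁, x₃`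
first leaves `∫ ψ(x) V(α² - x²) dx` over `‖x‖ ≤ p^N`, with `V` the function `pairVol`. Since
`‖α‖ ≤ p^(N-1)`, boundary points `‖x‖ = p^N` have `‖α² - x²‖ = p^(2N)`, where `V` is a constant
(`pairVol_far`), and for `N ≥ 2` the set defining `V` does not change when an interior `x` is
translated by `y` with `‖y‖ = p`. Choosing `ψ(y) ≠ 1` shows that the integral vanishes for `N ≥ 2`;
the cases `N = 0` and `N = 1` give `1` and `p` (`orbital_SO_value`).

On the `PGL(2)` side the Iwasawa decomposition (`phi_value`) shows that `φ'_t` is constant on shells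
and that only `s = t` and `s = -t - 2m` contribute, whence
`Ψ'_t(α⁻¹) = (-1)^t (ψ(α) [m ≥ -t] + [m > -t])` (`orbital_PGL_value`). The sum over
`t ∈ {r, r - 1}` telescopes to `(-1)^r (ψ(α) [m = -r] + [m = 1 - r])`, and `ψ(α) = 1` in these two
cases because `‖α‖ ≤ 1`.
-/

/-! ### Haar measure of balls and spheres, and integrals against a character -/

lemma measurableSet_zball (n : ℤ) : MeasurableSet {x : ℚ_[p] | ‖x‖ ≤ (p : ℝ) ^ n} :=
  (isClosed_le continuous_norm continuous_const).measurableSet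

lemma zball_eq (n : ℤ) :
    {x : ℚ_[p] | ‖x‖ ≤ (p : ℝ) ^ n} = Metric.closedBall 0 ((p : ℝ) ^ n) := by
  ext x; simp

/-- The ball of radius `p^(n+1)` is the disjoint union of `p` translates of the ball of radius
`p^n`. -/
lemma measure_zball_succ (μ : Measure ℚ_[p]) [μ.IsAddHaarMeasure] (n : ℤ) :
    μ {x : ℚ_[p] | ‖x‖ ≤ (p : ℝ) ^ (n + 1)} = p * μ {x : ℚ_[p] | ‖x‖ ≤ (p : ℝ) ^ n} := by
  have hp0 : (0 : ℝ) < p := by exact_mod_cast (Fact.out : p.Prime).pos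
  have hpQ : (p : ℚ_[p]) ≠ 0 := by exact_mod_cast (Fact.out : p.Prime).ne_zero
  set c : ℚ_[p] := (p : ℚ_[p]) ^ (-(n + 1)) with hc
  have hc0 : c ≠ 0 := zpow_ne_zero _ hpQ
  have hcn : ‖c‖ = (p : ℝ) ^ (n + 1) := by rw [hc, Padic.norm_p_zpow, neg_neg]
  have hcpos : 0 < (p : ℝ) ^ (n + 1) := zpow_pos hp0 _
  -- membership in a translate, rescaled to the unit ball
  have key : ∀ (x : ℚ_[p]) (i : ℕ), ‖-(i * c) + x‖ ≤ (p : ℝ) ^ n ↔ ‖x / c - i‖ < 1 := by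
    intro x i
    rw [Padic.norm_le_pow_iff_norm_lt_pow_add_one,
      show -((i : ℚ_[p]) * c) + x = (x / c - i) * c by field_simp; ring, norm_mul, hcn]
    exact mul_lt_iff_lt_one_left hcpos
  have hU : {x : ℚ_[p] | ‖x‖ ≤ (p : ℝ) ^ (n + 1)} =
      ⋃ i ∈ Finset.range p, (fun x => -((i : ℚ_[p]) * c) + x) ⁻¹' {x | ‖x‖ ≤ (p : ℝ) ^ n} := by
    ext x
    simp only [Set.mem_ofPred_eq, Set.mem_iUnion, Set.mem_preimage, key, Finset.mem_range,
      exists_prop]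
    constructor
    · intro hx
      have h1 : ‖x / c‖ ≤ 1 := by
        rw [norm_div, hcn]; exact (div_le_one hcpos).2 hx
      obtain ⟨y, hy⟩ : ∃ y : ℤ_[p], (y : ℚ_[p]) = x / c := ⟨⟨_, h1⟩, rfl⟩
      obtain ⟨i, hi, hm⟩ := PadicInt.exists_mem_range y
      refine ⟨i, hi, ?_⟩
      rw [IsLocalRing.mem_maximalIdeal, PadicInt.mem_nonunits] at hm
      rw [PadicInt.norm_def, PadicInt.coe_sub, PadicInt.coe_natCast, hy] at hm
      exact hm
    · rintro ⟨i, -, hi⟩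
      have h1 : ‖x / c‖ ≤ 1 := by
        have := Padic.nonarchimedean (x / c - (i : ℚ_[p])) (i : ℚ_[p])
        rw [sub_add_cancel] at this
        exact this.trans (max_le hi.le (by exact_mod_cast Padic.norm_int_le_one (i : ℤ)))
      rw [norm_div, hcn] at h1
      exact (div_le_one hcpos).1 h1
  rw [hU, measure_biUnion_finset]
  · simp only [measure_preimage_add, Finset.sum_const, Finset.card_range, nsmul_eq_mul]
  · intro i hi j hj hij
    simp only [Finset.coe_range, Set.mem_Iio] at hi hj
    refine Set.disjoint_left.2 fun x h1 h2 => hij ?_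
    simp only [Set.mem_preimage, Set.mem_ofPred_eq, key] at h1 h2
    have h3 : ‖(((i : ℤ) - (j : ℤ) : ℤ) : ℚ_[p])‖ < 1 := by
      have := Padic.nonarchimedean (x / c - (j : ℚ_[p])) (-(x / c - (i : ℚ_[p])))
      rw [norm_neg, show x / c - j + -(x / c - i) = (i : ℚ_[p]) - j by ring] at this
      push_cast
      exact this.trans_lt (max_lt h2 h1)
    rw [Padic.norm_intCast_lt_one_iff] at h3
    have := Int.eq_zero_of_abs_lt_dvd h3 (by rw [abs_lt]; omega)
    omega
  · intro i _
    exact (measurableSet_zball p n).preimage (measurable_const_add _)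

lemma measure_zball (μ : Measure ℚ_[p]) [μ.IsAddHaarMeasure]
    (hμ : μ {x : ℚ_[p] | ‖x‖ ≤ 1} = 1) (n : ℤ) :
    μ.real {x : ℚ_[p] | ‖x‖ ≤ (p : ℝ) ^ n} = (p : ℝ) ^ n := by
  have hp0 : (0 : ℝ) < p := by exact_mod_cast (Fact.out : p.Prime).pos
  have step : ∀ n : ℤ, μ.real {x : ℚ_[p] | ‖x‖ ≤ (p : ℝ) ^ (n + 1)} =
      p * μ.real {x : ℚ_[p] | ‖x‖ ≤ (p : ℝ) ^ n} := by
    intro n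
    simp [Measure.real, measure_zball_succ p μ n]
  induction n using Int.induction_on with
  | zero => simp [Measure.real, hμ]
  | succ i ih => rw [step, ih, zpow_add_one₀ hp0.ne', mul_comm]
  | pred i ih =>
    have h := step (-(i : ℤ) - 1)
    rw [sub_add_cancel, ih] at h
    exact mul_left_cancel₀ hp0.ne' (by rw [← h, zpow_sub_one₀ hp0.ne']; field_simp)

lemma measure_zball_ne_top (μ : Measure ℚ_[p]) [μ.IsAddHaarMeasure] (n : ℤ) :
    μ {x : ℚ_[p] | ‖x‖ ≤ (p : ℝ) ^ n} ≠ ⊤ := by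
  rw [zball_eq]; exact (isCompact_closedBall _ _).measure_lt_top.ne

lemma zsphere_eq (n : ℤ) : {x : ℚ_[p] | ‖x‖ = (p : ℝ) ^ n} =
    {x : ℚ_[p] | ‖x‖ ≤ (p : ℝ) ^ n} \ {x : ℚ_[p] | ‖x‖ ≤ (p : ℝ) ^ (n - 1)} := by
  ext x
  simp only [Set.mem_sdiff, Set.mem_ofPred_eq]
  rw [← Padic.norm_lt_pow_iff_norm_le_pow_sub_one, not_lt]
  exact le_antisymm_iff

lemma measure_zsphere (μ : Measure ℚ_[p]) [μ.IsAddHaarMeasure]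
    (hμ : μ {x : ℚ_[p] | ‖x‖ ≤ 1} = 1) (n : ℤ) :
    μ.real {x : ℚ_[p] | ‖x‖ = (p : ℝ) ^ n} = (p : ℝ) ^ n - (p : ℝ) ^ (n - 1) := by
  have hp1 : (1 : ℝ) ≤ p := by exact_mod_cast (Fact.out : p.Prime).one_le
  rw [zsphere_eq, measureReal_sdiff _ (measurableSet_zball p _) (measure_zball_ne_top p μ _),
    measure_zball p μ hμ, measure_zball p μ hμ]
  exact fun x hx => le_trans hx (zpow_le_zpow_right₀ hp1 (by omega))

/-- A function twisted by a character that is nontrivial on a period of the function has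
integral zero. -/
lemma integral_char_mul_eq_zero (μ : Measure ℚ_[p]) [μ.IsAddHaarMeasure]
    (ψ : ℚ_[p] → ℂ) (hψadd : ∀ x y : ℚ_[p], ψ (x + y) = ψ x * ψ y)
    (y : ℚ_[p]) (hy : ψ y ≠ 1) (g : ℚ_[p] → ℂ) (hg : ∀ x, g (x + y) = g x) :
    ∫ x, ψ x * g x ∂μ = 0 := by
  have h := integral_add_right_eq_self (μ := μ) (fun x => ψ x * g x) y
  simp only [hψadd, hg] at h
  rw [show (fun x => ψ x * ψ y * g x) = fun x => ψ y * (ψ x * g x) by ext; ring,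
    integral_const_mul] at h
  have : (ψ y - 1) * ∫ x, ψ x * g x ∂μ = 0 := by rw [sub_mul, h]; ring
  exact (mul_eq_zero.1 this).resolve_left (sub_ne_zero.2 hy)

/-- Fubini with the second of three variables outermost. -/
lemma integral_middle_first (μ : Measure ℚ_[p]) [μ.IsAddHaarMeasure]
    (F : ℚ_[p] × ℚ_[p] × ℚ_[p] → ℂ) (hF : Integrable F (μ.prod (μ.prod μ))) :
    ∫ x, F x ∂(μ.prod (μ.prod μ)) = ∫ y, ∫ z : ℚ_[p] × ℚ_[p], F (z.1, y, z.2) ∂(μ.prod μ) ∂μ := by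
  let e : ℚ_[p] × ℚ_[p] × ℚ_[p] ≃ᵐ ℚ_[p] × ℚ_[p] × ℚ_[p] :=
    (MeasurableEquiv.prodAssoc.symm.trans
      (MeasurableEquiv.prodCongr MeasurableEquiv.prodComm (MeasurableEquiv.refl _))).trans
      MeasurableEquiv.prodAssoc
  have he : MeasurePreserving e (μ.prod (μ.prod μ)) (μ.prod (μ.prod μ)) :=
    (measurePreserving_prodAssoc μ μ μ).comp
      ((Measure.measurePreserving_swap.prod (MeasurePreserving.id μ)).comp
        (measurePreserving_prodAssoc μ μ μ).symm)
  rw [← he.integral_comp' F]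
  exact integral_prod _ ((he.integrable_comp_emb e.measurableEmbedding).2 hF)

/-! ### The volume function of the inner integral -/

lemma norm_two_eq_one (hp : p ≠ 2) : ‖(2 : ℚ_[p])‖ = 1 := by
  have h := (Padic.norm_natCast_eq_one_iff (p := p) (n := 2)).2
    ((Nat.coprime_primes (Fact.out : p.Prime) Nat.prime_two).2 hp)
  exact_mod_cast h

/-- The volume of the set of pairs `(x, y)` in the square `‖x‖, ‖y‖ ≤ p^N` for which `2xy` lies
within distance `p^N` of `c`. -/
def pairVol (μ : Measure ℚ_[p]) (N : ℤ) (c : ℚ_[p]) : ℝ :=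
  (μ.prod μ).real {z : ℚ_[p] × ℚ_[p] |
    ‖z.1‖ ≤ (p : ℝ) ^ N ∧ ‖z.2‖ ≤ (p : ℝ) ^ N ∧ ‖c - 2 * (z.1 * z.2)‖ ≤ (p : ℝ) ^ N}

lemma isClosed_pairSet (N : ℤ) (c : ℚ_[p]) : IsClosed {z : ℚ_[p] × ℚ_[p] |
    ‖z.1‖ ≤ (p : ℝ) ^ N ∧ ‖z.2‖ ≤ (p : ℝ) ^ N ∧ ‖c - 2 * (z.1 * z.2)‖ ≤ (p : ℝ) ^ N} := by
  simp only [Set.ofPred_and]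
  refine .inter ?_ (.inter ?_ ?_) <;> exact isClosed_le (by fun_prop) continuous_const

lemma pairVol_congr (μ : Measure ℚ_[p]) {N : ℤ} {c c' : ℚ_[p]}
    (h : ‖c - c'‖ ≤ (p : ℝ) ^ N) : pairVol p μ N c = pairVol p μ N c' := by
  unfold pairVol
  congr 1
  ext z
  simp only [Set.mem_ofPred_eq]
  refine and_congr_right fun _ => and_congr_right fun _ => ⟨fun h1 => ?_, fun h1 => ?_⟩
  · have := Padic.nonarchimedean (c - 2 * (z.1 * z.2)) (-(c - c'))
    rw [norm_neg, show c - 2 * (z.1 * z.2) + -(c - c') = c' - 2 * (z.1 * z.2) by ring] at this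
    exact this.trans (max_le h1 h)
  · have := Padic.nonarchimedean (c' - 2 * (z.1 * z.2)) (c - c')
    rw [show c' - 2 * (z.1 * z.2) + (c - c') = c - 2 * (z.1 * z.2) by ring] at this
    exact this.trans (max_le h1 h)

/-- When `‖c‖ = p^(2N)` both coordinates must have norm exactly `p^N`, and for each such `x` the
admissible `y` form a ball of radius `1`. -/
lemma pairVol_far (hp : p ≠ 2) (μ : Measure ℚ_[p]) [μ.IsAddHaarMeasure]
    (hμ : μ {x : ℚ_[p] | ‖x‖ ≤ 1} = 1) {N : ℤ} (hN : 1 ≤ N) {c : ℚ_[p]}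
    (hc : ‖c‖ = (p : ℝ) ^ N * (p : ℝ) ^ N) :
    pairVol p μ N c = (p : ℝ) ^ N - (p : ℝ) ^ (N - 1) := by
  have hp1 : (1 : ℝ) < p := by exact_mod_cast (Fact.out : p.Prime).one_lt
  have hQ : 1 < (p : ℝ) ^ N := one_lt_zpow₀ hp1 (by omega)
  have h2 := norm_two_eq_one p hp
  rw [pairVol, Measure.real, Measure.prod_apply (isClosed_pairSet p N c).measurableSet,
    ← measure_zsphere p μ hμ, Measure.real]
  congr 1
  have hms : MeasurableSet {x : ℚ_[p] | ‖x‖ = (p : ℝ) ^ N} :=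
    (isClosed_eq continuous_norm continuous_const).measurableSet
  rw [← lintegral_indicator_one hms]
  refine lintegral_congr fun x => ?_
  by_cases hx : ‖x‖ = (p : ℝ) ^ N
  · rw [Set.indicator_of_mem (by exact hx), Pi.one_apply, ← hμ,
      ← measure_preimage_add μ (-(c / (2 * x))) {x | ‖x‖ ≤ 1}]
    congr 1
    ext y
    have hx0 : x ≠ 0 := by
      rintro rfl; rw [norm_zero] at hx; linarith
    have h20 : (2 : ℚ_[p]) ≠ 0 := by
      intro h; rw [h, norm_zero] at h2; exact zero_ne_one h2
    have e1 : ‖c - 2 * (x * y)‖ = (p : ℝ) ^ N * ‖-(c / (2 * x)) + y‖ := by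
      rw [show c - 2 * (x * y) = -((2 * x) * (-(c / (2 * x)) + y)) by field_simp; ring,
        norm_neg, norm_mul, norm_mul, h2, hx, one_mul]
    have e2 : ‖c / (2 * x)‖ = (p : ℝ) ^ N := by
      rw [norm_div, norm_mul, h2, hx, hc, one_mul]; field_simp
    have e3 : (p : ℝ) ^ N * ‖-(c / (2 * x)) + y‖ ≤ (p : ℝ) ^ N ↔ ‖-(c / (2 * x)) + y‖ ≤ 1 :=
      mul_le_iff_le_one_right (by linarith)
    simp only [Set.mem_preimage, Set.mem_ofPred_eq, e1, e3, hx, le_refl, true_and]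
    refine ⟨fun h => h.2, fun h => ⟨?_, h⟩⟩
    have := Padic.nonarchimedean (-(c / (2 * x)) + y) (c / (2 * x))
    rw [e2, show -(c / (2 * x)) + y + c / (2 * x) = y by ring] at this
    exact this.trans (max_le (by linarith) le_rfl)
  · rw [Set.indicator_of_notMem (by exact hx)]
    convert measure_empty (μ := μ)
    rw [Set.eq_empty_iff_forall_notMem]
    rintro y ⟨h1, h3, h4⟩
    simp only at h1 h3 h4
    have h5 : ‖2 * (x * y)‖ < (p : ℝ) ^ N * (p : ℝ) ^ N := by
      rw [norm_mul, norm_mul, h2, one_mul]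
      exact mul_lt_mul_of_lt_of_le_of_nonneg_of_pos (lt_of_le_of_ne h1 hx) h3 (norm_nonneg _)
        (by linarith)
    have h6 := Padic.nonarchimedean (c - 2 * (x * y)) (2 * (x * y))
    rw [sub_add_cancel, hc] at h6
    have h7 : (p : ℝ) ^ N < (p : ℝ) ^ N * (p : ℝ) ^ N := by nlinarith
    exact absurd h6 (not_le.2 (max_lt (h4.trans_lt h7) h5))

lemma pairVol_zero (μ : Measure ℚ_[p]) [μ.IsAddHaarMeasure]
    (hμ : μ {x : ℚ_[p] | ‖x‖ ≤ 1} = 1) {c : ℚ_[p]} (hc : ‖c‖ ≤ 1) :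
    pairVol p μ 0 c = 1 := by
  have e : {z : ℚ_[p] × ℚ_[p] |
      ‖z.1‖ ≤ (p : ℝ) ^ (0 : ℤ) ∧ ‖z.2‖ ≤ (p : ℝ) ^ (0 : ℤ) ∧
        ‖(0 : ℚ_[p]) - 2 * (z.1 * z.2)‖ ≤ (p : ℝ) ^ (0 : ℤ)} =
      {x : ℚ_[p] | ‖x‖ ≤ 1} ×ˢ {x : ℚ_[p] | ‖x‖ ≤ 1} := by
    ext z
    simp only [zpow_zero, Set.mem_ofPred_eq, Set.mem_prod, zero_sub, norm_neg, norm_mul]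
    refine ⟨fun h => ⟨h.1, h.2.1⟩, fun h => ⟨h.1, h.2, ?_⟩⟩
    have h2 : ‖(2 : ℚ_[p])‖ ≤ 1 := by exact_mod_cast Padic.norm_int_le_one (p := p) 2
    exact mul_le_one₀ h2 (by positivity) (mul_le_one₀ h.1 (norm_nonneg _) h.2)
  rw [pairVol_congr p μ (c' := 0) (by simpa using hc), pairVol, e, Measure.real, Measure.prod_prod,
    hμ]
  simp

/-- For `N = 1` and `‖c‖ ≤ p` the condition is `‖xy‖ ≤ p`, which cuts the square
into `‖x‖ ≤ 1` (with `y` free) and `‖x‖ = p` (with `y` integral). -/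
lemma pairVol_one_near (hp : p ≠ 2) (μ : Measure ℚ_[p]) [μ.IsAddHaarMeasure]
    (hμ : μ {x : ℚ_[p] | ‖x‖ ≤ 1} = 1) {c : ℚ_[p]} (hc : ‖c‖ ≤ p) :
    pairVol p μ 1 c = (p - 1) + p := by
  have hp1 : (1 : ℝ) < p := by exact_mod_cast (Fact.out : p.Prime).one_lt
  have h2 := norm_two_eq_one p hp
  have dich : ∀ x : ℚ_[p], ‖x‖ ≤ p → ‖x‖ ≤ 1 ∨ ‖x‖ = p := by
    intro x hx
    rcases hx.lt_or_eq with h | h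
    · left
      have := (Padic.norm_le_pow_iff_norm_lt_pow_add_one x 0).2 (by simpa using h)
      simpa using this
    · exact Or.inr h
  have e : {z : ℚ_[p] × ℚ_[p] |
      ‖z.1‖ ≤ (p : ℝ) ^ (1 : ℤ) ∧ ‖z.2‖ ≤ (p : ℝ) ^ (1 : ℤ) ∧
        ‖(0 : ℚ_[p]) - 2 * (z.1 * z.2)‖ ≤ (p : ℝ) ^ (1 : ℤ)} =
      {x : ℚ_[p] | ‖x‖ = (p : ℝ) ^ (1 : ℤ)} ×ˢ {x : ℚ_[p] | ‖x‖ ≤ (p : ℝ) ^ (0 : ℤ)} ∪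
      {x : ℚ_[p] | ‖x‖ ≤ (p : ℝ) ^ (0 : ℤ)} ×ˢ {x : ℚ_[p] | ‖x‖ ≤ (p : ℝ) ^ (1 : ℤ)} := by
    ext ⟨x, y⟩
    simp only [zpow_zero, zpow_one, Set.mem_union, Set.mem_ofPred_eq, Set.mem_prod, zero_sub,
      norm_neg, norm_mul, h2, one_mul]
    constructor
    · rintro ⟨h1, h3, h4⟩
      rcases dich x h1 with h | h
      · exact Or.inr ⟨h, h3⟩
      · refine Or.inl ⟨h, ?_⟩
        rw [h] at h4
        exact (mul_le_iff_le_one_right (by linarith)).1 h4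
    · rintro (⟨h1, h3⟩ | ⟨h1, h3⟩)
      · exact ⟨h1.le, by linarith, by rw [h1]; nlinarith⟩
      · exact ⟨by linarith, h3, by nlinarith [norm_nonneg x, norm_nonneg y]⟩
  have hms : MeasurableSet {x : ℚ_[p] | ‖x‖ ≤ (p : ℝ) ^ (0 : ℤ)} := measurableSet_zball p 0
  have htop : ∀ s : Set (ℚ_[p] × ℚ_[p]), s ⊆ {x : ℚ_[p] | ‖x‖ ≤ (p : ℝ) ^ (1 : ℤ)} ×ˢ
      {x : ℚ_[p] | ‖x‖ ≤ (p : ℝ) ^ (1 : ℤ)} → (μ.prod μ) s ≠ ⊤ := by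
    intro s hs
    refine ne_top_of_le_ne_top ?_ (measure_mono hs)
    rw [Measure.prod_prod]
    exact ENNReal.mul_ne_top (measure_zball_ne_top p μ 1) (measure_zball_ne_top p μ 1)
  have hd : Disjoint
      ({x : ℚ_[p] | ‖x‖ = (p : ℝ) ^ (1 : ℤ)} ×ˢ {x : ℚ_[p] | ‖x‖ ≤ (p : ℝ) ^ (0 : ℤ)})
      ({x : ℚ_[p] | ‖x‖ ≤ (p : ℝ) ^ (0 : ℤ)} ×ˢ {x : ℚ_[p] | ‖x‖ ≤ (p : ℝ) ^ (1 : ℤ)}) := by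
    refine Set.disjoint_left.2 ?_
    rintro ⟨x, y⟩ ⟨h1, -⟩ ⟨h3, -⟩
    simp only [Set.mem_ofPred_eq, zpow_zero, zpow_one] at h1 h3
    linarith
  rw [pairVol_congr p μ (c' := 0) (by simpa using hc), pairVol, e,
    measureReal_union hd (hms.prod (measurableSet_zball p 1)) (htop _ ?_) (htop _ ?_),
    measureReal_prod_prod, measureReal_prod_prod, measure_zsphere p μ hμ, measure_zball p μ hμ,
    measure_zball p μ hμ]
  · simp
  · rintro ⟨x, y⟩ ⟨h1, h3⟩
    simp only [Set.mem_prod, Set.mem_ofPred_eq, zpow_zero, zpow_one] at h1 h3 ⊢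
    exact ⟨h1.le, by linarith⟩
  · rintro ⟨x, y⟩ ⟨h1, h3⟩
    simp only [Set.mem_prod, Set.mem_ofPred_eq, zpow_zero, zpow_one] at h1 h3 ⊢
    exact ⟨by linarith, h3⟩

lemma continuous_char (ψ : ℚ_[p] → ℂ) (hψadd : ∀ x y : ℚ_[p], ψ (x + y) = ψ x * ψ y)
    (hψ1 : ∀ x : ℚ_[p], ‖x‖ ≤ 1 → ψ x = 1) : Continuous ψ := by
  refine continuous_iff_continuousAt.2 fun x => ?_
  refine (continuousAt_const (y := ψ x)).congr ?_
  filter_upwards [Metric.ball_mem_nhds x one_pos] with z hz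
  rw [Metric.mem_ball, dist_eq_norm] at hz
  rw [show z = x + (z - x) by ring, hψadd, hψ1 _ hz.le, mul_one]

/-! ### The orbital integral on `SO(3,2)` -/

lemma orbital_eq_integral_pairVol (hp : p ≠ 2) (μ : Measure ℚ_[p]) [μ.IsAddHaarMeasure]
    (ψ : ℚ_[p] → ℂ) (hψ : Continuous ψ) (r : ℕ) {α : ℚ_[p]} {m : ℤ}
    (hα : ‖α‖ = (p : ℝ) ^ m) (hm : 0 ≤ r + m) :
    ∫ x : ℚ_[p] × ℚ_[p] × ℚ_[p],
        Set.indicator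
          {x : ℚ_[p] × ℚ_[p] × ℚ_[p] |
            ‖α / 2 + (-(x.1 * x.2.2) - x.2.1 ^ 2 / 2) / α‖ ≤ (p : ℝ) ^ (r : ℤ) ∧
            ‖x.1 / α‖ ≤ (p : ℝ) ^ (r : ℤ) ∧ ‖x.2.1 / α‖ ≤ (p : ℝ) ^ (r : ℤ) ∧
            ‖x.2.2 / α‖ ≤ (p : ℝ) ^ (r : ℤ) ∧ ‖α⁻¹‖ ≤ (p : ℝ) ^ (r : ℤ)}
          (fun x => ψ x.2.1) x ∂(μ.prod (μ.prod μ)) =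
      ∫ x, ψ x * (if ‖x‖ ≤ (p : ℝ) ^ (r + m) then (pairVol p μ (r + m) (α ^ 2 - x ^ 2) : ℂ)
        else 0) ∂μ := by
  have hp1 : (1 : ℝ) < p := by exact_mod_cast (Fact.out : p.Prime).one_lt
  have hp0 : (p : ℝ) ≠ 0 := by positivity
  have h2 := norm_two_eq_one p hp
  have hQ : (p : ℝ) ^ (r + m) = (p : ℝ) ^ (r : ℤ) * ‖α‖ := by rw [hα, zpow_add₀ hp0]
  have hαpos : 0 < ‖α‖ := by rw [hα]; positivity
  have hα0 : α ≠ 0 := norm_pos_iff.1 hαpos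
  have h20 : (2 : ℚ_[p]) ≠ 0 := by
    intro h; rw [h, norm_zero] at h2; exact zero_ne_one h2
  set Q := (p : ℝ) ^ (r + m) with hQdef
  have hS : {x : ℚ_[p] × ℚ_[p] × ℚ_[p] |
      ‖α / 2 + (-(x.1 * x.2.2) - x.2.1 ^ 2 / 2) / α‖ ≤ (p : ℝ) ^ (r : ℤ) ∧
      ‖x.1 / α‖ ≤ (p : ℝ) ^ (r : ℤ) ∧ ‖x.2.1 / α‖ ≤ (p : ℝ) ^ (r : ℤ) ∧
      ‖x.2.2 / α‖ ≤ (p : ℝ) ^ (r : ℤ) ∧ ‖α⁻¹‖ ≤ (p : ℝ) ^ (r : ℤ)} =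
      {x : ℚ_[p] × ℚ_[p] × ℚ_[p] | ‖x.2.1‖ ≤ Q ∧ ‖x.1‖ ≤ Q ∧ ‖x.2.2‖ ≤ Q ∧
        ‖α ^ 2 - x.2.1 ^ 2 - 2 * (x.1 * x.2.2)‖ ≤ Q} := by
    ext ⟨x, y, z⟩
    have e1 : ‖α / 2 + (-(x * z) - y ^ 2 / 2) / α‖ ≤ (p : ℝ) ^ (r : ℤ) ↔
        ‖α ^ 2 - y ^ 2 - 2 * (x * z)‖ ≤ Q := by
      rw [show α / 2 + (-(x * z) - y ^ 2 / 2) / α = (α ^ 2 - y ^ 2 - 2 * (x * z)) / (2 * α) by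
        field_simp; ring, norm_div, norm_mul, h2, one_mul, div_le_iff₀ hαpos, ← hQ]
    have e2 : ∀ x : ℚ_[p], ‖x / α‖ ≤ (p : ℝ) ^ (r : ℤ) ↔ ‖x‖ ≤ Q := by
      intro x; rw [norm_div, div_le_iff₀ hαpos, ← hQ]
    have e3 : ‖α⁻¹‖ ≤ (p : ℝ) ^ (r : ℤ) := by
      rw [norm_inv, hα, ← _root_.zpow_neg]; exact zpow_le_zpow_right₀ hp1.le (by omega)
    simp only [Set.mem_ofPred_eq, e1, e2, e3]
    tauto
  rw [hS]
  have hSclosed : IsClosed {x : ℚ_[p] × ℚ_[p] × ℚ_[p] | ‖x.2.1‖ ≤ Q ∧ ‖x.1‖ ≤ Q ∧ ‖x.2.2‖ ≤ Q ∧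
        ‖α ^ 2 - x.2.1 ^ 2 - 2 * (x.1 * x.2.2)‖ ≤ Q} := by
    simp only [Set.ofPred_and]
    refine .inter ?_ (.inter ?_ (.inter ?_ ?_)) <;> exact isClosed_le (by fun_prop) continuous_const
  have hScomp := (isCompact_closedBall (0 : ℚ_[p] × ℚ_[p] × ℚ_[p]) Q).of_isClosed_subset hSclosed
    (by
      rintro ⟨x, y, z⟩ ⟨h1, h3, h4, -⟩
      rw [mem_closedBall_zero_iff]
      exact max_le h3 (max_le h1 h4))
  rw [integral_middle_first p μ _ ((integrable_indicator_iff hSclosed.measurableSet).2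
    (ContinuousOn.integrableOn_compact hScomp (by fun_prop)))]
  congr 1
  ext y
  have hz : ∀ z : ℚ_[p] × ℚ_[p], Set.indicator {x : ℚ_[p] × ℚ_[p] × ℚ_[p] | ‖x.2.1‖ ≤ Q ∧
      ‖x.1‖ ≤ Q ∧ ‖x.2.2‖ ≤ Q ∧ ‖α ^ 2 - x.2.1 ^ 2 - 2 * (x.1 * x.2.2)‖ ≤ Q}
      (fun x => ψ x.2.1) (z.1, y, z.2) = (ψ y * if ‖y‖ ≤ Q then 1 else 0) *
        Set.indicator {z : ℚ_[p] × ℚ_[p] | ‖z.1‖ ≤ Q ∧ ‖z.2‖ ≤ Q ∧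
          ‖α ^ 2 - y ^ 2 - 2 * (z.1 * z.2)‖ ≤ Q} (fun _ => (1 : ℂ)) z := by
    intro z
    simp only [Set.indicator_apply, Set.mem_ofPred_eq, ite_and]
    split_ifs <;> simp
  simp only [hz]
  rw [integral_const_mul, integral_indicator_const _ (isClosed_pairSet p (r + m) _).measurableSet,
    pairVol]
  split_ifs <;> simp

/-- Only the two smallest nonempty cases contribute: once `‖α‖ ≥ p^(2-r)`, the volume
`pairVol (α² - x²)` is unchanged by translating `x` by an element on which `ψ` is nontrivial. -/
lemma orbital_SO_value (hp : p ≠ 2) (μ : Measure ℚ_[p]) [μ.IsAddHaarMeasure]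
    (hμ : μ {x : ℚ_[p] | ‖x‖ ≤ 1} = 1)
    (ψ : ℚ_[p] → ℂ)
    (hψadd : ∀ x y : ℚ_[p], ψ (x + y) = ψ x * ψ y)
    (hψ1 : ∀ x : ℚ_[p], ‖x‖ ≤ 1 → ψ x = 1)
    (hψnt : ∃ x : ℚ_[p], ‖x‖ = (p : ℝ) ∧ ψ x ≠ 1)
    (r : ℕ) (hr : 1 ≤ r) {α : ℚ_[p]} {m : ℤ} (hα : ‖α‖ = (p : ℝ) ^ m) :
    ∫ x : ℚ_[p] × ℚ_[p] × ℚ_[p],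
        Set.indicator
          {x : ℚ_[p] × ℚ_[p] × ℚ_[p] |
            ‖α / 2 + (-(x.1 * x.2.2) - x.2.1 ^ 2 / 2) / α‖ ≤ (p : ℝ) ^ (r : ℤ) ∧
            ‖x.1 / α‖ ≤ (p : ℝ) ^ (r : ℤ) ∧ ‖x.2.1 / α‖ ≤ (p : ℝ) ^ (r : ℤ) ∧
            ‖x.2.2 / α‖ ≤ (p : ℝ) ^ (r : ℤ) ∧ ‖α⁻¹‖ ≤ (p : ℝ) ^ (r : ℤ)}
          (fun x => ψ x.2.1) x ∂(μ.prod (μ.prod μ)) =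
      if m = -r then 1 else if m = 1 - r then (p : ℂ) else 0 := by
  have hp1 : (1 : ℝ) < p := by exact_mod_cast (Fact.out : p.Prime).one_lt
  have hp0 : (p : ℝ) ≠ 0 := by positivity
  have hZ : MeasurableSet {x : ℚ_[p] | ‖x‖ ≤ 1} := by simpa using measurableSet_zball p 0
  have hZint : ∫ x, (if ‖x‖ ≤ 1 then (1 : ℂ) else 0) ∂μ = 1 := by
    have h := integral_indicator_const (μ := μ) (1 : ℂ) hZ
    rw [Measure.real, hμ] at h
    simpa [Set.indicator_apply] using h
  have hψZ : ∀ x, ψ x * (if ‖x‖ ≤ 1 then (1 : ℂ) else 0) = if ‖x‖ ≤ 1 then (1 : ℂ) else 0 := by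
    intro x
    split_ifs with h
    · rw [hψ1 x h, mul_one]
    · simp
  have hψc := continuous_char p ψ hψadd hψ1
  obtain ⟨y, hy, hψy⟩ := hψnt
  rcases lt_or_ge (r + m) 0 with hm | hm
  · rw [if_neg (by omega), if_neg (by omega)]
    refine (integral_congr_ae (Filter.Eventually.of_forall fun x => ?_)).trans
      (integral_zero (ℚ_[p] × ℚ_[p] × ℚ_[p]) ℂ)
    refine Set.indicator_of_notMem ?_ _
    rintro ⟨-, -, -, -, h⟩
    rw [norm_inv, hα, ← _root_.zpow_neg, zpow_le_zpow_iff_right₀ hp1] at h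
    omega
  rw [orbital_eq_integral_pairVol p hp μ ψ hψc r hα hm]
  -- balls of radius at least `p` are stable under translation by `y`
  have hball : ∀ N : ℤ, 1 ≤ N → ∀ x, ‖x + y‖ ≤ (p : ℝ) ^ N ↔ ‖x‖ ≤ (p : ℝ) ^ N := by
    intro N hN x
    have hyN : ‖y‖ ≤ (p : ℝ) ^ N := by
      rw [hy]; simpa using zpow_le_zpow_right₀ hp1.le hN
    constructor
    · intro h
      have := Padic.nonarchimedean (x + y) (-y)
      rw [norm_neg, add_neg_cancel_right] at this
      exact this.trans (max_le h hyN)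
    · intro h
      exact (Padic.nonarchimedean x y).trans (max_le h hyN)
  -- for `x` on the boundary of the square, `α² - x²` is as large as possible
  have hfar : ∀ x, ‖x‖ = (p : ℝ) ^ (r + m) →
      ‖α ^ 2 - x ^ 2‖ = (p : ℝ) ^ (r + m) * (p : ℝ) ^ (r + m) := by
    intro x hx
    have hlt : ‖α‖ < ‖x‖ := by
      rw [hα, hx]; exact zpow_lt_zpow_right₀ hp1 (by omega)
    have hlt2 : ‖α ^ 2‖ < ‖-(x ^ 2)‖ := by
      rw [norm_neg, norm_pow, norm_pow]; gcongr
    rw [sub_eq_add_neg, Padic.add_eq_max_of_ne hlt2.ne, max_eq_right hlt2.le, norm_neg, norm_pow,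
      hx, sq]
  rcases eq_or_ne (r + m) 0 with h0 | h0
  · -- the square is the unit square and every condition is automatic
    rw [if_pos (by omega), h0]
    rw [← hZint]
    congr 1
    ext x
    rw [← hψZ x, zpow_zero]
    split_ifs with h
    · rw [pairVol_zero p μ hμ]
      · simp
      have hα1 : ‖α‖ ≤ 1 := by
        rw [hα]; exact zpow_le_one_of_nonpos₀ hp1.le (by omega)
      rw [sub_eq_add_neg]
      refine (Padic.nonarchimedean _ _).trans (max_le ?_ ?_)
      · rw [norm_pow]; exact pow_le_one₀ (norm_nonneg _) hα1
      · rw [norm_neg, norm_pow]; exact pow_le_one₀ (norm_nonneg _) h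
    · rfl
  rw [if_neg (by omega)]
  rcases eq_or_ne (r + m) 1 with h1 | h1
  · -- the volume is `p - 1` on the ball of radius `p`, plus `p` on the unit ball
    rw [if_pos (by omega), h1]
    have hα1 : ‖α‖ ≤ 1 := by
      rw [hα]; exact zpow_le_one_of_nonpos₀ hp1.le (by omega)
    have hval : ∀ x, ψ x * (if ‖x‖ ≤ (p : ℝ) ^ (1 : ℤ) then (pairVol p μ 1 (α ^ 2 - x ^ 2) : ℂ)
        else 0) = ψ x * (if ‖x‖ ≤ (p : ℝ) ^ (1 : ℤ) then ((p : ℂ) - 1) else 0) +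
          p * (if ‖x‖ ≤ 1 then (1 : ℂ) else 0) := by
      intro x
      by_cases hx1 : ‖x‖ ≤ 1
      · have hxp : ‖x‖ ≤ (p : ℝ) ^ (1 : ℤ) := by rw [zpow_one]; linarith
        rw [if_pos hxp, if_pos hxp, if_pos hx1, hψ1 x hx1, pairVol_one_near p hp μ hμ]
        · push_cast; ring
        rw [sub_eq_add_neg]
        refine (Padic.nonarchimedean _ _).trans (le_trans (max_le ?_ ?_) hp1.le)
        · rw [norm_pow]; exact pow_le_one₀ (norm_nonneg _) hα1
        · rw [norm_neg, norm_pow]; exact pow_le_one₀ (norm_nonneg _) hx1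
      rw [if_neg hx1, mul_zero, add_zero]
      split_ifs with hx
      · have hx' : ‖x‖ = (p : ℝ) ^ (1 : ℤ) := by
          refine le_antisymm hx ?_
          by_contra h
          rw [not_le] at h
          have := (Padic.norm_le_pow_iff_norm_lt_pow_add_one x 0).2 (by simpa using h)
          exact hx1 (by simpa using this)
        have := hfar x (by rw [h1]; exact hx')
        rw [h1] at this
        rw [pairVol_far p hp μ hμ le_rfl this]
        simp
      · rfl
    simp only [hval]
    have hB : (fun x => ψ x * (if ‖x‖ ≤ (p : ℝ) ^ (1 : ℤ) then ((p : ℂ) - 1) else 0)) =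
        Set.indicator {x | ‖x‖ ≤ (p : ℝ) ^ (1 : ℤ)} (fun x => ψ x * ((p : ℂ) - 1)) := by
      ext x; simp [Set.indicator_apply]
    rw [integral_add, integral_const_mul, hZint,
      integral_char_mul_eq_zero p μ ψ hψadd y hψy _ (fun x => by simp only [hball 1 le_rfl x])]
    · simp
    · rw [hB, integrable_indicator_iff (measurableSet_zball p 1), zball_eq]
      exact ContinuousOn.integrableOn_compact (isCompact_closedBall _ _) (by fun_prop)
    · refine Integrable.const_mul ?_ _
      by_contra h
      rw [integral_undef h] at hZint
      exact zero_ne_one hZint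
  rw [if_neg (by omega)]
  refine integral_char_mul_eq_zero p μ ψ hψadd y hψy _ fun x => ?_
  simp only [hball (r + m) (by omega) x]
  split_ifs with hx
  · congr 1
    rcases hx.lt_or_eq with hx' | hx'
    · apply pairVol_congr
      rw [Padic.norm_lt_pow_iff_norm_le_pow_sub_one] at hx'
      rw [show α ^ 2 - (x + y) ^ 2 - (α ^ 2 - x ^ 2) = -(y * (2 * x + y)) by ring, norm_neg,
        norm_mul, hy]
      have hyN : ‖y‖ ≤ (p : ℝ) ^ (r + m - 1) := by
        rw [hy]; simpa using zpow_le_zpow_right₀ hp1.le (show 1 ≤ r + m - 1 by omega)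
      have : ‖2 * x + y‖ ≤ (p : ℝ) ^ (r + m - 1) := by
        refine (Padic.nonarchimedean _ _).trans (max_le ?_ hyN)
        rwa [norm_mul, norm_two_eq_one p hp, one_mul]
      calc (p : ℝ) * ‖2 * x + y‖ ≤ p * (p : ℝ) ^ (r + m - 1) := by gcongr
        _ = (p : ℝ) ^ (r + m) := by rw [zpow_sub_one₀ hp0]; field_simp
    · have hlt : ‖y‖ < ‖x‖ := by
        rw [hy, hx']; simpa using zpow_lt_zpow_right₀ hp1 (show 1 < r + m by omega)
      have hxy : ‖x + y‖ = (p : ℝ) ^ (r + m) := by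
        rw [Padic.add_eq_max_of_ne hlt.ne', max_eq_left hlt.le, hx']
      rw [pairVol_far p hp μ hμ (by omega) (hfar _ hxy),
        pairVol_far p hp μ hμ (by omega) (hfar _ hx')]
  · rfl

/-! ### The orbital integral on `PGL(2)` -/

/-- The Iwasawa decomposition of `w n(β) diag(a, 1)`, split according to which entry of the bottom
row `(-a, -β)` is larger. -/
lemma phi_value (ψ : ℚ_[p] → ℂ) (t : ℤ) (φ : Matrix (Fin 2) (Fin 2) ℚ_[p] → ℂ)
    (hN : ∀ (x : ℚ_[p]) (g : Matrix (Fin 2) (Fin 2) ℚ_[p]),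
      φ (!![1, x; 0, 1] * g) = ψ (-x) * φ g)
    (hK : ∀ (g k : Matrix (Fin 2) (Fin 2) ℚ_[p]),
      (∀ i j, ‖k i j‖ ≤ 1) → ‖k.det‖ = 1 → φ (g * k) = φ g)
    (hZ : ∀ (c : ℚ_[p]) (g : Matrix (Fin 2) (Fin 2) ℚ_[p]), c ≠ 0 →
      φ ((c • (1 : Matrix (Fin 2) (Fin 2) ℚ_[p])) * g) = φ g)
    (hval : ∀ α : ℚ_[p], φ !![α, 0; 0, 1] = if ‖α‖ = (p : ℝ) ^ (-t) then 1 else 0)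
    {a β : ℚ_[p]} {s m : ℤ} (ha : ‖a‖ = (p : ℝ) ^ s) (hβ : ‖β‖ = (p : ℝ) ^ (-m)) :
    φ (!![0, 1; -1, 0] * !![1, β; 0, 1] * !![a, 0; 0, 1]) =
      (if s = -t - 2 * m then (if -t ≤ m then ψ β⁻¹ else 0) else 0) +
        (if s = t then (if -t < m then 1 else 0) else 0) := by
  have hp1 : (1 : ℝ) < p := by exact_mod_cast (Fact.out : p.Prime).one_lt
  have hp0 : (p : ℝ) ≠ 0 := by positivity
  have ha0 : a ≠ 0 := norm_pos_iff.1 (by rw [ha]; positivity)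
  have hβ0 : β ≠ 0 := norm_pos_iff.1 (by rw [hβ]; positivity)
  rcases le_or_gt s (-m) with h | h
  · have e : (!![0, 1; -1, 0] * !![1, β; 0, 1] * !![a, 0; 0, 1] : Matrix (Fin 2) (Fin 2) ℚ_[p]) =
        ((-β) • (1 : Matrix (Fin 2) (Fin 2) ℚ_[p])) *
          (!![1, -β⁻¹; 0, 1] * !![a / β ^ 2, 0; 0, 1]) * !![1, 0; a / β, 1] := by
      ext i j
      fin_cases i <;> fin_cases j <;> simp [Matrix.mul_apply, Fin.sum_univ_two] <;> field_simp <;>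
        ring
    have hq : ‖a / β‖ ≤ 1 := by
      rw [norm_div, ha, hβ, ← zpow_sub₀ hp0]
      exact zpow_le_one_of_nonpos₀ hp1.le (by omega)
    have hd : ‖a / β ^ 2‖ = (p : ℝ) ^ (s + 2 * m) := by
      rw [norm_div, norm_pow, ha, hβ, ← zpow_natCast, ← _root_.zpow_mul, ← zpow_sub₀ hp0]
      congr 1; push_cast; ring
    have hinj : (p : ℝ) ^ (s + 2 * m) = (p : ℝ) ^ (-t) ↔ s + 2 * m = -t :=
      zpow_right_inj₀ (by positivity) hp1.ne'
    rw [e, hK _ _ _ _, hZ _ _ (neg_ne_zero.2 hβ0), hN, hval, neg_neg, hd]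
    · simp only [hinj]
      split_ifs <;> first | omega | simp
    · intro i j; fin_cases i <;> fin_cases j <;> simp [hq, -norm_div]
    · simp [Matrix.det_fin_two]
  · have e : (!![0, 1; -1, 0] * !![1, β; 0, 1] * !![a, 0; 0, 1] : Matrix (Fin 2) (Fin 2) ℚ_[p]) =
        ((-a) • (1 : Matrix (Fin 2) (Fin 2) ℚ_[p])) * !![-a⁻¹, 0; 0, 1] * !![0, 1; 1, β / a] := by
      ext i j
      fin_cases i <;> fin_cases j <;> simp [Matrix.mul_apply, Fin.sum_univ_two] <;> field_simp
    have hq : ‖β / a‖ ≤ 1 := by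
      rw [norm_div, ha, hβ, ← zpow_sub₀ hp0]
      exact zpow_le_one_of_nonpos₀ hp1.le (by omega)
    have hd : ‖-a⁻¹‖ = (p : ℝ) ^ (-s) := by
      rw [norm_neg, norm_inv, ha, _root_.zpow_neg]
    have hinj : (p : ℝ) ^ (-s) = (p : ℝ) ^ (-t) ↔ -s = -t :=
      zpow_right_inj₀ (by positivity) hp1.ne'
    rw [e, hK _ _ _ _, hZ _ _ (neg_ne_zero.2 ha0), hval, hd]
    · simp only [hinj]
      split_ifs <;> first | omega | simp
    · intro i j; fin_cases i <;> fin_cases j <;> simp [hq, -norm_div]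
    · simp [Matrix.det_fin_two]

/-- The multiplicative measure `(1 - 1/p)⁻¹ ‖a‖⁻¹ da` gives each shell mass `1`. -/
lemma shell_value (μ : Measure ℚ_[p]) [μ.IsAddHaarMeasure]
    (hμ : μ {x : ℚ_[p] | ‖x‖ ≤ 1} = 1) (s : ℤ) (f : ℚ_[p] → ℂ) (C : ℂ)
    (hf : ∀ a, ‖a‖ = (p : ℝ) ^ s → f a = C) :
    (1 - 1/(p : ℝ))⁻¹ • ∫ a in {a : ℚ_[p] | ‖a‖ = (p : ℝ) ^ s}, (‖a‖ : ℂ)⁻¹ * f a ∂μ = C := by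
  have hp1 : (1 : ℝ) < p := by exact_mod_cast (Fact.out : p.Prime).one_lt
  have hp0 : (p : ℝ) ≠ 0 := by positivity
  have hms : MeasurableSet {a : ℚ_[p] | ‖a‖ = (p : ℝ) ^ s} :=
    (isClosed_eq continuous_norm continuous_const).measurableSet
  rw [setIntegral_congr_fun (g := fun _ => (((p : ℝ) ^ s : ℝ) : ℂ)⁻¹ * C) hms
    (fun a (ha : ‖a‖ = _) => by simp only [ha, hf a ha]), setIntegral_const,
    measure_zsphere p μ hμ, smul_smul, zpow_sub_one₀ hp0]
  have h1 : (1 - 1 / (p : ℝ))⁻¹ * ((p : ℝ) ^ s - (p : ℝ) ^ s * (p : ℝ)⁻¹) = (p : ℝ) ^ s := by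
    have : (p : ℝ) - 1 ≠ 0 := by linarith
    field_simp
  rw [h1, Complex.real_smul, mul_inv_cancel_left₀]
  exact_mod_cast zpow_ne_zero s hp0

/-- The `PGL(2)` orbital integral: at most two shells `‖a‖ = p^s` contribute, `s = -t - 2m` and
`s = t`, and these exponents have the same parity. -/
lemma orbital_PGL_value (μ : Measure ℚ_[p]) [μ.IsAddHaarMeasure]
    (hμ : μ {x : ℚ_[p] | ‖x‖ ≤ 1} = 1)
    (ψ : ℚ_[p] → ℂ) (t : ℤ) (φ : Matrix (Fin 2) (Fin 2) ℚ_[p] → ℂ)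
    (hN : ∀ (x : ℚ_[p]) (g : Matrix (Fin 2) (Fin 2) ℚ_[p]),
      φ (!![1, x; 0, 1] * g) = ψ (-x) * φ g)
    (hK : ∀ (g k : Matrix (Fin 2) (Fin 2) ℚ_[p]),
      (∀ i j, ‖k i j‖ ≤ 1) → ‖k.det‖ = 1 → φ (g * k) = φ g)
    (hZ : ∀ (c : ℚ_[p]) (g : Matrix (Fin 2) (Fin 2) ℚ_[p]), c ≠ 0 →
      φ ((c • (1 : Matrix (Fin 2) (Fin 2) ℚ_[p])) * g) = φ g)
    (hval : ∀ α : ℚ_[p], φ !![α, 0; 0, 1] = if ‖α‖ = (p : ℝ) ^ (-t) then 1 else 0)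
    (I : ℤ → ℚ_[p] → ℂ)
    (hI : ∀ (s : ℤ) (β : ℚ_[p]), I s β = (1 - 1/(p : ℝ))⁻¹ •
      ∫ a in {a : ℚ_[p] | ‖a‖ = (p : ℝ) ^ s},
        (‖a‖ : ℂ)⁻¹ * φ (!![0, 1; -1, 0] * !![1, β; 0, 1] * !![a, 0; 0, 1]) ∂μ)
    {β : ℚ_[p]} {m : ℤ} (hβ : ‖β‖ = (p : ℝ) ^ (-m)) :
    {s : ℤ | I s β ≠ 0}.Finite ∧ ∑ᶠ s : ℤ, (-1 : ℂ) ^ s * I s β =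
      (-1) ^ t * ((if -t ≤ m then ψ β⁻¹ else 0) + (if -t < m then 1 else 0)) := by
  have hIv : ∀ s, I s β = (if s = -t - 2 * m then (if -t ≤ m then ψ β⁻¹ else 0) else 0) +
        (if s = t then (if -t < m then 1 else 0) else 0) := by
    intro s
    rw [hI]
    exact shell_value p μ hμ s _ _ fun a ha => phi_value p ψ t φ hN hK hZ hval ha hβ
  have hfin : {s : ℤ | I s β ≠ 0}.Finite := by
    refine (Set.toFinite {-t - 2 * m, t}).subset fun s hs => ?_
    by_contra h
    simp only [Set.mem_insert_iff, Set.mem_singleton_iff, not_or] at h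
    exact hs (by rw [hIv, if_neg h.1, if_neg h.2, add_zero])
  refine ⟨hfin, ?_⟩
  have hpar : (-1 : ℂ) ^ (-t - 2 * m) = (-1) ^ t := by
    rw [show -t - 2 * m = t + 2 * (-t - m) by ring, zpow_add₀ (by norm_num), _root_.zpow_mul]
    simp
  have single : ∀ (u : ℤ) (A : ℂ),
      (Function.support fun s : ℤ => (-1 : ℂ) ^ s * (if s = u then A else 0)).Finite := by
    intro u A
    refine (Set.finite_singleton u).subset fun s hs => ?_
    by_contra h
    exact hs (by simp only [Set.mem_singleton_iff] at h; simp [h])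
  simp only [hIv, mul_add]
  rw [finsum_add_distrib (single _ _) (single _ _),
    finsum_eq_single _ (-t - 2 * m) (fun s hs => by simp [hs]),
    finsum_eq_single _ t (fun s hs => by simp [hs]), if_pos rfl, if_pos rfl, hpar]

/-! ### The matching identity -/

/-- the fundamental lemma, split case, on basis elements: for all
`α ≠ 0`, the `SO(3,2)` Fourier orbital integral `Ψ(α,Φ_r)` equals
`ψ(α)·‖α‖·(−1)^r p^r·(Ψ'(α⁻¹,φ'_r) + Ψ'(α⁻¹,φ'_{r−1}))`. -/
theorem stmt_19 (hp : p ≠ 2) (μ : Measure ℚ_[p]) [μ.IsAddHaarMeasure]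
    (hμ : μ {x : ℚ_[p] | ‖x‖ ≤ 1} = 1)
    (ψ : ℚ_[p] → ℂ)
    (hψadd : ∀ x y : ℚ_[p], ψ (x + y) = ψ x * ψ y)
    (hψ1 : ∀ x : ℚ_[p], ‖x‖ ≤ 1 → ψ x = 1)
    (hψnt : ∃ x : ℚ_[p], ‖x‖ = (p : ℝ) ∧ ψ x ≠ 1)
    (r : ℕ) (hr : 1 ≤ r)
    -- the split-case orbital integral `Ψ_r(α) = Ψ(α, Φ_r)` on `SO(3,2;ℚ_p)`
    (Ψ : ℚ_[p] → ℂ)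
    (hΨ : ∀ α : ℚ_[p], Ψ α =
      ∫ x : ℚ_[p] × ℚ_[p] × ℚ_[p],
        Set.indicator
          {x : ℚ_[p] × ℚ_[p] × ℚ_[p] |
            ‖α / 2 + (-(x.1 * x.2.2) - x.2.1 ^ 2 / 2) / α‖ ≤ (p : ℝ) ^ (r : ℤ) ∧
            ‖x.1 / α‖ ≤ (p : ℝ) ^ (r : ℤ) ∧ ‖x.2.1 / α‖ ≤ (p : ℝ) ^ (r : ℤ) ∧
            ‖x.2.2 / α‖ ≤ (p : ℝ) ^ (r : ℤ) ∧ ‖α⁻¹‖ ≤ (p : ℝ) ^ (r : ℤ)}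
          (fun x => ψ x.2.1) x ∂(μ.prod (μ.prod μ)))
    -- the elements `φ'_r` and `φ'_{r−1}` of `C_c(N'\H/K', ψ_{N'})`
    (φr φrm : Matrix (Fin 2) (Fin 2) ℚ_[p] → ℂ)
    (hφrN : ∀ (x : ℚ_[p]) (g : Matrix (Fin 2) (Fin 2) ℚ_[p]),
      φr (!![1, x; 0, 1] * g) = ψ (-x) * φr g)
    (hφrK : ∀ (g k : Matrix (Fin 2) (Fin 2) ℚ_[p]),
      (∀ i j, ‖k i j‖ ≤ 1) → ‖k.det‖ = 1 → φr (g * k) = φr g)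
    (hφrZ : ∀ (c : ℚ_[p]) (g : Matrix (Fin 2) (Fin 2) ℚ_[p]), c ≠ 0 →
      φr ((c • (1 : Matrix (Fin 2) (Fin 2) ℚ_[p])) * g) = φr g)
    (hφrval : ∀ α : ℚ_[p],
      φr !![α, 0; 0, 1] = if ‖α‖ = (p : ℝ) ^ (-(r : ℤ)) then 1 else 0)
    (hφrmN : ∀ (x : ℚ_[p]) (g : Matrix (Fin 2) (Fin 2) ℚ_[p]),
      φrm (!![1, x; 0, 1] * g) = ψ (-x) * φrm g)
    (hφrmK : ∀ (g k : Matrix (Fin 2) (Fin 2) ℚ_[p]),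
      (∀ i j, ‖k i j‖ ≤ 1) → ‖k.det‖ = 1 → φrm (g * k) = φrm g)
    (hφrmZ : ∀ (c : ℚ_[p]) (g : Matrix (Fin 2) (Fin 2) ℚ_[p]), c ≠ 0 →
      φrm ((c • (1 : Matrix (Fin 2) (Fin 2) ℚ_[p])) * g) = φrm g)
    (hφrmval : ∀ α : ℚ_[p],
      φrm !![α, 0; 0, 1] = if ‖α‖ = (p : ℝ) ^ (-((r : ℤ) - 1)) then 1 else 0)
    -- the shell integrals and the `PGL(2)` orbital integrals `Ψ'_t(β) = Ψ'(β, φ'_t)`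
    (IshR IshRm : ℤ → ℚ_[p] → ℂ)
    (hIshR : ∀ (s : ℤ) (β : ℚ_[p]), IshR s β = (1 - 1/(p : ℝ))⁻¹ •
      ∫ a in {a : ℚ_[p] | ‖a‖ = (p : ℝ) ^ s},
        (‖a‖ : ℂ)⁻¹ * φr (!![0, 1; -1, 0] * !![1, β; 0, 1] * !![a, 0; 0, 1]) ∂μ)
    (hIshRm : ∀ (s : ℤ) (β : ℚ_[p]), IshRm s β = (1 - 1/(p : ℝ))⁻¹ •
      ∫ a in {a : ℚ_[p] | ‖a‖ = (p : ℝ) ^ s},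
        (‖a‖ : ℂ)⁻¹ * φrm (!![0, 1; -1, 0] * !![1, β; 0, 1] * !![a, 0; 0, 1]) ∂μ)
    (Ψ'r Ψ'rm : ℚ_[p] → ℂ)
    (hΨ'r : ∀ β : ℚ_[p], Ψ'r β = ∑ᶠ s : ℤ, (-1 : ℂ) ^ s * IshR s β)
    (hΨ'rm : ∀ β : ℚ_[p], Ψ'rm β = ∑ᶠ s : ℤ, (-1 : ℂ) ^ s * IshRm s β) :
    -- for each β only finitely many summands are nonzero
    (∀ β : ℚ_[p], β ≠ 0 →
      {s : ℤ | IshR s β ≠ 0}.Finite ∧ {s : ℤ | IshRm s β ≠ 0}.Finite)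
    -- the matching identity
    ∧ ∀ α : ℚ_[p], α ≠ 0 →
        Ψ α = ψ α * (‖α‖ : ℂ) * ((-1 : ℂ) ^ r * (p : ℂ) ^ r) *
          (Ψ'r α⁻¹ + Ψ'rm α⁻¹) := by
  have hp1 : (1 : ℝ) < p := by exact_mod_cast (Fact.out : p.Prime).one_lt
  have hpC : (p : ℂ) ≠ 0 := by exact_mod_cast (Fact.out : p.Prime).ne_zero
  have hR := fun (β : ℚ_[p]) (m : ℤ) (hβ : ‖β‖ = (p : ℝ) ^ (-m)) =>
    orbital_PGL_value p μ hμ ψ r φr hφrN hφrK hφrZ hφrval IshR hIshR hβ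
  have hRm := fun (β : ℚ_[p]) (m : ℤ) (hβ : ‖β‖ = (p : ℝ) ^ (-m)) =>
    orbital_PGL_value p μ hμ ψ (r - 1) φrm hφrmN hφrmK hφrmZ hφrmval IshRm hIshRm hβ
  refine ⟨fun β hβ => ?_, fun α hα => ?_⟩
  · have h := Padic.norm_eq_zpow_neg_valuation hβ
    exact ⟨(hR β _ h).1, (hRm β _ h).1⟩
  obtain ⟨m, hm⟩ : ∃ m : ℤ, ‖α‖ = (p : ℝ) ^ m := ⟨_, Padic.norm_eq_zpow_neg_valuation hα⟩
  have hm' : ‖α⁻¹‖ = (p : ℝ) ^ (-m) := by rw [norm_inv, hm, _root_.zpow_neg]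
  have hψα : m ≤ 0 → ψ α = 1 := fun h =>
    hψ1 α (by rw [hm]; exact zpow_le_one_of_nonpos₀ hp1.le h)
  have hsq : (-1 : ℂ) ^ r * (-1) ^ r = 1 := by rw [← mul_pow]; simp
  rw [hΨ, orbital_SO_value p hp μ hμ ψ hψadd hψ1 hψnt r hr hm, hΨ'r, hΨ'rm, (hR _ m hm').2,
    (hRm _ m hm').2, inv_inv, zpow_sub_one₀ (by norm_num), zpow_natCast, hm]
  -- the two terms `t = r`, `t = r - 1` telescope
  have htel : (-1 : ℂ) ^ r * ((if -(r : ℤ) ≤ m then ψ α else 0) + if -(r : ℤ) < m then 1 else 0) +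
      (-1 : ℂ) ^ r * (-1)⁻¹ * ((if -((r : ℤ) - 1) ≤ m then ψ α else 0) +
        if -((r : ℤ) - 1) < m then 1 else 0) =
      (-1) ^ r * ((if m = -r then 1 else 0) + (if m = 1 - r then 1 else 0)) := by
    rcases lt_trichotomy m (-r) with h | h | h
    · rw [if_neg (by omega), if_neg (by omega), if_neg (by omega), if_neg (by omega),
        if_neg (by omega), if_neg (by omega)]
      ring
    · rw [if_pos h.ge, if_neg (by omega), if_neg (by omega), if_neg (by omega), if_pos h,
        if_neg (by omega), hψα (by omega)]
      ring
    · rcases eq_or_ne m (1 - r) with h' | h'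
      · rw [if_pos h.le, if_pos h, if_pos (by omega), if_neg (by omega), if_neg (by omega),
          if_pos h']
        ring
      · rw [if_pos h.le, if_pos h, if_pos (by omega), if_pos (by omega), if_neg (by omega),
          if_neg h']
        ring
  rw [htel]
  push_cast
  rcases eq_or_ne m (-r) with h | h
  · rw [if_pos h, if_pos h, if_neg (by omega), hψα (by omega), h, _root_.zpow_neg, zpow_natCast]
    have : (p : ℂ) ^ r ≠ 0 := pow_ne_zero _ hpC
    field_simp
    linear_combination -hsq
  rw [if_neg h, if_neg h]
  rcases eq_or_ne m (1 - r) with h' | h'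
  · rw [if_pos h', if_pos h', hψα (by omega), h', zpow_sub₀ hpC, zpow_one, zpow_natCast]
    have : (p : ℂ) ^ r ≠ 0 := pow_ne_zero _ hpC
    field_simp
    linear_combination -hsq
  · rw [if_neg h', if_neg h']
    ring

end
end
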